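/- Let r ≥ 4 and let p > 4 be prime, and let V be a quasi-Hermitian variety of PG(r,p^2) whose characteristic vector v^V belongs to C_p. If π is a plane of PG(r,p^2) with |π ∩ V| ≤ p^3 + p^2 + p + 1, then π ∩ V is either a classical unital of π, or a single line of π, or the union of p+1 distinct lines of π all passing through a common point. -/

import Mathlib

/-!
Common framework: `ProjPoint F n` is the set of points of the projective space
PG(n-1, |F|) (so PG(r, q²) corresponds to `n = r + 1` and `Fintype.card F = q ^ 2`).
Projective subspaces of projective dimension `k` are the submodules of `Fin n → F`
of `finrank` equal to `k + 1`; lines have finrank 2, planes finrank 3 and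
hyperplanes finrank `n - 1 = r`.
-/

open Module Matrix

/-- The points of the projective space PG(n-1, |F|): one-dimensional subspaces
of `F^n`. -/
def ProjPoint (F : Type) [Field F] (n : ℕ) : Type :=
  {W : Submodule F (Fin n → F) // finrank F W = 1}

/-- The set of projective points lying in a given subspace `W`. -/
def pointsIn (F : Type) [Field F] (n : ℕ) (W : Submodule F (Fin n → F)) :
    Set (ProjPoint F n) :=
  {P | P.1 ≤ W}

/-- The number of points of `V` lying in the subspace `W`. -/
noncomputable def secant (F : Type) [Field F] (n : ℕ) (V : Set (ProjPoint F n))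
    (W : Submodule F (Fin n → F)) : ℕ :=
  (V ∩ pointsIn F n W).ncard

/-- The characteristic vector of a set of projective points, with values in `F_p`. -/
noncomputable def charVec (F : Type) [Field F] (p n : ℕ) (S : Set (ProjPoint F n)) :
    ProjPoint F n → ZMod p :=
  Set.indicator S 1

/-- `C_p`: the `F_p`-code spanned by the characteristic vectors of hyperplanes. -/
def hypCode (F : Type) [Field F] (p n : ℕ) :
    Submodule (ZMod p) (ProjPoint F n → ZMod p) :=
  Submodule.span (ZMod p)
    {v | ∃ H : Submodule F (Fin n → F), finrank F H = n - 1 ∧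
      v = charVec F p n (pointsIn F n H)}

/-- A quasi-Hermitian variety of PG(r, q²): it has the size of a non-singular
Hermitian variety and the same two intersection numbers with hyperplanes.
(All identities are stated multiplied through by `q² - 1`.) -/
def IsQuasiHermitian (F : Type) [Field F] (q r : ℕ)
    (V : Set (ProjPoint F (r + 1))) : Prop :=
  (V.ncard : ℤ) * ((q : ℤ) ^ 2 - 1)
      = ((q : ℤ) ^ (r + 1) + (-1) ^ r) * ((q : ℤ) ^ r - (-1) ^ r) ∧
  ∀ H : Submodule F (Fin (r + 1) → F), finrank F H = r →
    ((secant F (r + 1) V H : ℤ) * ((q : ℤ) ^ 2 - 1)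
        = ((q : ℤ) ^ r + (-1) ^ (r - 1)) * ((q : ℤ) ^ (r - 1) - (-1) ^ (r - 1)) ∨
     (secant F (r + 1) V H : ℤ) * ((q : ℤ) ^ 2 - 1)
        = ((q : ℤ) ^ 2 - 1)
          + (q : ℤ) ^ 2 * (((q : ℤ) ^ (r - 1) + (-1) ^ r) * ((q : ℤ) ^ (r - 2) - (-1) ^ r)))

/-- The zero set, in PG(n-1,|F|), of the Hermitian form `x ↦ xᵀ A x^(q)`. -/
def hermSet (F : Type) [Field F] (q n : ℕ) (A : Matrix (Fin n) (Fin n) F) :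
    Set (ProjPoint F n) :=
  {P | ∀ x ∈ P.1, ∑ i, ∑ j, x i * A i j * (x j) ^ q = 0}

/-- A non-singular Hermitian variety of PG(n-1, q²). -/
def IsNonsingHermitian (F : Type) [Field F] (q n : ℕ)
    (V : Set (ProjPoint F n)) : Prop :=
  ∃ A : Matrix (Fin n) (Fin n) F, IsUnit A.det ∧
    Aᵀ = A.map (fun a => a ^ q) ∧ V = hermSet F q n A

/-- A singular Hermitian variety of PG(n-1, q²) whose singular space (the radical
of the Hermitian form) has projective dimension `d`. -/
def IsSingularHermitian (F : Type) [Field F] (q n d : ℕ)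
    (S : Set (ProjPoint F n)) : Prop :=
  ∃ A : Matrix (Fin n) (Fin n) F,
    Aᵀ = A.map (fun a => a ^ q) ∧
    finrank F (LinearMap.ker (Matrix.toLin' Aᵀ)) = d + 1 ∧
    S = hermSet F q n A

/-- A `d`-singular quasi-Hermitian variety of PG(r, q²). -/
def IsSingularQuasiHermitian (F : Type) [Field F] (q r d : ℕ)
    (S : Set (ProjPoint F (r + 1))) : Prop :=
  ∃ S₀ : Set (ProjPoint F (r + 1)), IsSingularHermitian F q (r + 1) d S₀ ∧
    S.ncard = S₀.ncard ∧
    ∀ H : Submodule F (Fin (r + 1) → F), finrank F H = r →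
      ∃ H₀ : Submodule F (Fin (r + 1) → F), finrank F H₀ = r ∧
        secant F (r + 1) S H = secant F (r + 1) S₀ H₀

/-- `U` is a classical unital (Hermitian curve) of the plane `π` of PG(n-1, q²):
in some coordinatization `e` of `π`, it is the zero set of a non-degenerate
Hermitian form on `F³`. -/
def IsClassicalUnital (F : Type) [Field F] (q n : ℕ)
    (π : Submodule F (Fin n → F)) (U : Set (ProjPoint F n)) : Prop :=
  ∃ e : (Fin 3 → F) →ₗ[F] (Fin n → F), LinearMap.ker e = ⊥ ∧ LinearMap.range e = π ∧
    ∃ A : Matrix (Fin 3) (Fin 3) F, IsUnit A.det ∧ Aᵀ = A.map (fun a => a ^ q) ∧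
      U = {P | ∃ y : Fin 3 → F, y ≠ 0 ∧ P.1 = Submodule.span F {e y} ∧
        ∑ i, ∑ j, y i * A i j * (y j) ^ q = 0}

namespace QH
section P1
open scoped Classical
open Finset

theorem charP_F {F : Type} [Field F] [Fintype F] {p : ℕ} (hp : p.Prime)
    (hF : Fintype.card F = p ^ 2) : CharP F p := by
  have := Fact.mk hp
  exact charP_of_card_eq_prime_pow hF

theorem geom_sub {F : Type} [Field F] {p : ℕ} (hp : p.Prime) [CharP F p] (m : ℕ) (hm : m ≠ 0)
    (z w : F) : (z - w) ^ (p ^ m - 1) = ∑ k ∈ range (p ^ m), z ^ (p ^ m - 1 - k) * w ^ k := by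
  have := Fact.mk hp
  have hpos : 1 < p ^ m := Nat.one_lt_pow hm hp.one_lt
  by_cases h : z = w
  · subst h
    rw [sub_self, zero_pow (by omega)]
    have : ∀ k ∈ range (p ^ m), z ^ (p ^ m - 1 - k) * z ^ k = z ^ (p ^ m - 1) := by
      intro k hk
      rw [← pow_add]; congr 1; have := mem_range.1 hk; omega
    rw [sum_congr rfl this, sum_const, card_range, nsmul_eq_mul]
    have : ((p ^ m : ℕ) : F) = 0 := by
      rw [CharP.cast_eq_zero_iff F p]; exact dvd_pow_self p hm
    rw [this, zero_mul]
  · have h' : z - w ≠ 0 := sub_ne_zero.2 h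
    apply mul_right_cancel₀ h'
    rw [← pow_succ, Nat.sub_add_cancel hpos.le, sub_pow_char_pow]
    have := (Commute.all w z).geom_sum₂_mul (p ^ m)
    have e : ∑ k ∈ range (p ^ m), z ^ (p ^ m - 1 - k) * w ^ k
      = ∑ i ∈ range (p ^ m), w ^ i * z ^ (p ^ m - 1 - i) := sum_congr rfl fun _ _ => mul_comm _ _
    rw [e]
    linear_combination this

theorem coeff_unique {F : Type} [Field F] [Fintype F] {Q : ℕ} (hF : Fintype.card F = Q)
    (c d : ℕ → F) (h : ∀ T : F, ∑ k ∈ range Q, c k * T ^ (Q - 1 - k)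
      = ∑ k ∈ range Q, d k * T ^ (Q - 1 - k)) : ∀ k < Q, c k = d k := by
  have key : ∑ k ∈ range Q, Polynomial.C (c k - d k) * Polynomial.X ^ (Q - 1 - k) = 0 := by
    apply Polynomial.eq_zero_of_natDegree_lt_card_of_eval_eq_zero' _ (univ : Finset F)
    · intro T _
      simp only [Polynomial.eval_finsetSum, Polynomial.eval_mul, Polynomial.eval_C,
        Polynomial.eval_pow, Polynomial.eval_X, sub_mul, sum_sub_distrib]
      rw [h T, sub_self]
    · rw [card_univ, hF]
      have hQ : 0 < Q := by rw [← hF]; exact Fintype.card_pos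
      refine lt_of_le_of_lt (Polynomial.natDegree_sum_le_of_forall_le (n := Q - 1) _ _ ?_) (by omega)
      intro k _
      exact (Polynomial.natDegree_C_mul_X_pow_le _ _).trans (by omega)
  intro k hk
  have := congrArg (fun q => Polynomial.coeff q (Q - 1 - k)) key
  simp only [Polynomial.finsetSum_coeff, Polynomial.coeff_C_mul, Polynomial.coeff_X_pow,
    Polynomial.coeff_zero] at this
  rw [sum_eq_single k] at this
  · simp at this; exact sub_eq_zero.1 this
  · intro b hb hbk
    have := mem_range.1 hb
    rw [if_neg (by omega), mul_zero]
  · intro h; exact absurd (mem_range.2 hk) h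

theorem pow_card_sub_one_ite {F : Type} [Field F] [Fintype F] {Q : ℕ} (hF : Fintype.card F = Q)
    (x : F) : x ^ (Q - 1) = if x = 0 then 0 else 1 := by
  have hQ : 1 < Q := by rw [← hF]; exact Fintype.one_lt_card
  split_ifs with h
  · rw [h, zero_pow (by omega)]
  · rw [← hF]; exact FiniteField.pow_card_sub_one_eq_one x h

theorem line_coeff {F : Type} [Field F] [Fintype F] {p : ℕ} (hp : p.Prime)
    (hF : Fintype.card F = p ^ 2) (c : ℕ → F) (A : Finset F)
    (h : ∀ T : F, ∑ k ∈ range (p ^ 2), c k * T ^ (p ^ 2 - 1 - k) = if T ∈ A then 0 else 1) :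
    (∀ k < p ^ 2 - 1, c k = ∑ a ∈ A, a ^ k) ∧
      c (p ^ 2 - 1) = 1 - (A.card : F) + ∑ a ∈ A, a ^ (p ^ 2 - 1) := by
  have := charP_F hp hF
  have hQ : 1 < p ^ 2 := Nat.one_lt_pow (by norm_num) hp.one_lt
  have key := coeff_unique hF c
    (fun k => (∑ a ∈ A, a ^ k) + if k = p ^ 2 - 1 then 1 - (A.card : F) else 0) ?_
  · constructor
    · intro k hk
      rw [key k (by omega), if_neg (by omega), add_zero]
    · rw [key _ (by omega), if_pos rfl, add_comm]
  · intro T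
    rw [h T]
    simp only [add_mul, sum_add_distrib, ite_mul, zero_mul]
    rw [sum_ite_eq' (range (p ^ 2)) (p ^ 2 - 1), if_pos (mem_range.2 (by omega))]
    simp only [sum_mul]
    rw [sum_comm]
    have e : ∀ a ∈ A, ∑ k ∈ range (p ^ 2), a ^ k * T ^ (p ^ 2 - 1 - k)
        = if T = a then 0 else 1 := by
      intro a _
      have h1 := geom_sub hp 2 (by norm_num) T a
      have h2 := pow_card_sub_one_ite hF (T - a)
      rw [sub_eq_zero] at h2
      rw [← h2, h1]
      exact sum_congr rfl fun _ _ => mul_comm _ _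
    rw [sum_congr rfl e]
    have e2 : ∀ a ∈ A, (if T = a then (0 : F) else 1) = 1 - if T = a then 1 else 0 := by
      intro a _; split_ifs <;> simp
    rw [sum_congr rfl e2, sum_sub_distrib, sum_ite_eq]
    simp
    split_ifs <;> simp

/-- Binary forms of degree `k` as functions. -/
def Form (F : Type) [Field F] (k : ℕ) : Submodule F (F × F → F) :=
  Submodule.span F {f | ∃ i j, i + j = k ∧ f = fun x => x.1 ^ i * x.2 ^ j}

theorem Form.mul {F : Type} [Field F] {k m : ℕ} {f g : F × F → F} (hf : f ∈ Form F k)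
    (hg : g ∈ Form F m) : (fun x => f x * g x) ∈ Form F (k + m) := by
  change f * g ∈ _
  induction hf using Submodule.span_induction with
  | mem f hf =>
    obtain ⟨i, j, hij, rfl⟩ := hf
    induction hg using Submodule.span_induction with
    | mem g hg =>
      obtain ⟨i', j', hij', rfl⟩ := hg
      refine Submodule.subset_span ⟨i + i', j + j', by omega, ?_⟩
      ext x; simp [pow_add]; ring
    | zero => rw [mul_zero]; exact Submodule.zero_mem _
    | add x y _ _ hx hy => rw [mul_add]; exact Submodule.add_mem _ hx hy
    | smul a x _ hx => rw [mul_smul_comm]; exact Submodule.smul_mem _ _ hx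
  | zero => rw [zero_mul]; exact Submodule.zero_mem _
  | add x y _ _ hx hy => rw [add_mul]; exact Submodule.add_mem _ hx hy
  | smul a x _ hx => rw [smul_mul_assoc]; exact Submodule.smul_mem _ _ hx

theorem Form.one {F : Type} [Field F] : (fun _ : F × F => (1 : F)) ∈ Form F 0 :=
  Submodule.subset_span ⟨0, 0, rfl, by ext; simp⟩

theorem Form.lin {F : Type} [Field F] (a b : F) :
    (fun x : F × F => x.1 * a + x.2 * b) ∈ Form F 1 := by
  have h1 : (fun x : F × F => x.1) ∈ Form F 1 := Submodule.subset_span ⟨1, 0, rfl, by ext; simp⟩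
  have h2 : (fun x : F × F => x.2) ∈ Form F 1 := Submodule.subset_span ⟨0, 1, rfl, by ext; simp⟩
  have := Submodule.add_mem _ (Submodule.smul_mem _ a h1) (Submodule.smul_mem _ b h2)
  convert this using 1
  ext x; simp [mul_comm]

theorem Form.pow {F : Type} [Field F] {k : ℕ} {f : F × F → F} (hf : f ∈ Form F k) (n : ℕ) :
    (fun x => f x ^ n) ∈ Form F (n * k) := by
  induction n with
  | zero => simpa using Form.one
  | succ n ih =>
    have := Form.mul ih hf
    rw [Nat.succ_mul]; simpa only [pow_succ] using this

theorem Form.const_mul {F : Type} [Field F] {k : ℕ} {f : F × F → F} (hf : f ∈ Form F k) (a : F) :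
    (fun x => a * f x) ∈ Form F k := Submodule.smul_mem _ a hf

theorem Form.sum {F : Type} [Field F] {k : ℕ} {ι : Type} (s : Finset ι) {f : ι → F × F → F}
    (hf : ∀ i ∈ s, f i ∈ Form F k) : (fun x => ∑ i ∈ s, f i x) ∈ Form F k := by
  have := Submodule.sum_mem _ hf
  convert this using 1
  ext x; simp

theorem Form.exists_poly {F : Type} [Field F] {k : ℕ} {f : F × F → F} (hf : f ∈ Form F k) :
    ∃ e : ℕ → F, ∀ x, f x = ∑ i ∈ range (k + 1), e i * (x.1 ^ i * x.2 ^ (k - i)) := by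
  induction hf using Submodule.span_induction with
  | mem f hf =>
    obtain ⟨i, j, hij, rfl⟩ := hf
    refine ⟨fun m => if m = i then 1 else 0, fun x => ?_⟩
    simp only [ite_mul, one_mul, zero_mul]
    rw [sum_ite_eq' , if_pos (mem_range.2 (by omega))]
    simp [← hij]
  | zero => exact ⟨0, fun x => by simp⟩
  | add f g _ _ hf hg =>
    obtain ⟨e, he⟩ := hf
    obtain ⟨d, hd⟩ := hg
    refine ⟨e + d, fun x => ?_⟩
    simp [he, hd, add_mul, sum_add_distrib]
  | smul a f _ hf =>
    obtain ⟨e, he⟩ := hf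
    refine ⟨a • e, fun x => ?_⟩
    simp [he, mul_sum, mul_assoc]

/-- A form of degree `k` with more than `k (Q-1)` nonzero zeros vanishes. -/
theorem Form.eq_zero {F : Type} [Field F] [Fintype F] {k : ℕ} {f : F × F → F} (hf : f ∈ Form F k)
    (h : k * (Fintype.card F - 1) < (univ.filter fun x : F × F => x ≠ 0 ∧ f x = 0).card) :
    ∀ x, f x = 0 := by
  obtain ⟨e, he⟩ := Form.exists_poly hf
  set q : Polynomial F := ∑ i ∈ range (k + 1), Polynomial.C (e i) * Polynomial.X ^ i with hq
  have hqc : ∀ i, i ≤ k → q.coeff i = e i := by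
    intro i hi
    simp only [hq, Polynomial.finsetSum_coeff, Polynomial.coeff_C_mul, Polynomial.coeff_X_pow,
      mul_ite, mul_one, mul_zero]
    rw [sum_ite_eq, if_pos (mem_range.2 (by omega))]
  have hqd : q.natDegree ≤ k := by
    refine Polynomial.natDegree_sum_le_of_forall_le _ _ ?_
    intro i hi
    have := mem_range.1 hi
    exact (Polynomial.natDegree_C_mul_X_pow_le _ _).trans (by omega)
  by_cases hq0 : q = 0
  · intro x
    rw [he]
    refine sum_eq_zero fun i hi => ?_
    rw [← hqc i (by have := mem_range.1 hi; omega), hq0]; simp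
  exfalso
  have hev : ∀ s t : F, t ≠ 0 → f (s, t) = 0 → q.eval (s / t) = 0 := by
    intro s t ht hft
    have : f (s, t) = t ^ k * q.eval (s / t) := by
      rw [he, hq, Polynomial.eval_finsetSum, mul_sum]
      refine sum_congr rfl fun i hi => ?_
      have hi' := mem_range.1 hi
      simp only [Polynomial.eval_mul, Polynomial.eval_C, Polynomial.eval_pow, Polynomial.eval_X]
      have : t ^ k = t ^ (k - i) * t ^ i := by rw [← pow_add]; congr 1; omega
      rw [this, div_pow]; field_simp
    rw [this] at hft
    exact (mul_eq_zero.1 hft).resolve_left (pow_ne_zero _ ht)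
  have hsplit : (univ.filter fun x : F × F => x ≠ 0 ∧ f x = 0) ⊆
      ((q.roots.toFinset ×ˢ (univ.filter fun t : F => t ≠ 0)).image fun y => (y.1 * y.2, y.2)) ∪
      ((univ.filter fun s : F => s ≠ 0 ∧ f (s, 0) = 0).image fun s => (s, 0)) := by
    rintro ⟨s, t⟩ hx
    simp only [mem_filter, mem_univ, true_and] at hx
    rw [mem_union]
    by_cases ht : t = 0
    · right
      subst ht
      refine mem_image.2 ⟨s, ?_, rfl⟩
      simp only [mem_filter, mem_univ, true_and]
      refine ⟨fun h => hx.1 (by rw [h]; rfl), hx.2⟩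
    · left
      refine mem_image.2 ⟨(s / t, t), ?_, by simp [ht]⟩
      rw [mem_product]
      refine ⟨?_, by simpa using ht⟩
      simp only [Multiset.mem_toFinset]
      rw [Polynomial.mem_roots hq0]
      exact hev s t ht hx.2
  have hcard : (univ.filter fun t : F => t ≠ 0).card = Fintype.card F - 1 := by
    rw [filter_ne', card_erase_of_mem (mem_univ _), card_univ]
  have hr : q.roots.toFinset.card ≤ q.natDegree :=
    (Multiset.toFinset_card_le _).trans (Polynomial.card_roots' q)
  have h1 := card_le_card hsplit
  have h2 := h1.trans (card_union_le _ _)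
  have h3 := (card_image_le (s := q.roots.toFinset ×ˢ (univ.filter fun t : F => t ≠ 0))
    (f := fun y => (y.1 * y.2, y.2)))
  rw [card_product, hcard] at h3
  have h4 := (card_image_le (s := (univ.filter fun s : F => s ≠ 0 ∧ f (s, 0) = 0))
    (f := fun s => ((s, 0) : F × F)))
  have hf0 : ∀ s, f (s, 0) = e k * s ^ k := by
    intro s
    rw [he, sum_eq_single k]
    · simp
    · intro b hb hbk
      have := mem_range.1 hb
      have : k - b ≠ 0 := by omega
      simp [this]
    · intro h; simp at h
  by_cases hek : e k = 0
  · have hdeg : q.natDegree < k ∨ q.natDegree = k := lt_or_eq_of_le hqd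
    have hlt : q.natDegree < k := by
      rcases hdeg with h | h
      · exact h
      · exfalso
        have := Polynomial.leadingCoeff_ne_zero.2 hq0
        rw [Polynomial.leadingCoeff, h, hqc k le_rfl] at this
        exact this hek
    have h5 : (univ.filter fun s : F => s ≠ 0 ∧ f (s, 0) = 0).card ≤ Fintype.card F - 1 := by
      rw [← hcard]
      refine card_le_card fun s hs => ?_
      simp only [mem_filter, mem_univ, true_and] at hs ⊢
      exact hs.1
    have h6 : q.roots.toFinset.card * (Fintype.card F - 1) ≤ (k - 1) * (Fintype.card F - 1) :=
      Nat.mul_le_mul_right _ (by omega)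
    have h7 : k * (Fintype.card F - 1) = (k - 1) * (Fintype.card F - 1) + (Fintype.card F - 1) := by
      conv_lhs => rw [show k = (k - 1) + 1 by omega]
      ring
    omega
  · have h5 : (univ.filter fun s : F => s ≠ 0 ∧ f (s, 0) = 0) = ∅ := by
      rw [filter_eq_empty_iff]
      rintro s _ ⟨hs, hs'⟩
      rw [hf0] at hs'
      exact (mul_ne_zero hek (pow_ne_zero _ hs)) hs'
    rw [h5, card_empty] at h4
    have h6 : q.roots.toFinset.card * (Fintype.card F - 1) ≤ k * (Fintype.card F - 1) :=
      Nat.mul_le_mul_right _ (by omega)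
    rw [h5] at h2
    omega

end P1
end QH

namespace QH
section P2
open scoped Classical
open Finset

/-- The data describing the plane section. -/
structure PD (F E : Type) [Field F] [Fintype F] [AddCommGroup E] [Module F E] [Fintype E]
    (p : ℕ) where
  hp : p.Prime
  hp4 : 4 < p
  hF : Fintype.card F = p ^ 2
  hE : Fintype.card E = (p ^ 2) ^ 3
  ι : Type
  I : Finset ι
  a : ι → F
  l : ι → E →ₗ[F] F
  h01 : ∀ y, ∑ i ∈ I, a i * (l i y) ^ (p ^ 2 - 1) = 0 ∨ ∑ i ∈ I, a i * (l i y) ^ (p ^ 2 - 1) = 1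
  hsize : (univ.filter fun y => ∑ i ∈ I, a i * (l i y) ^ (p ^ 2 - 1) = 0).card
    ≤ (p ^ 3 + p ^ 2 + p + 1) * (p ^ 2 - 1) + 1

def Ind2 {F E : Type} [Field F] [AddCommGroup E] [Module F E] (u w : E) : Prop :=
  ∀ s t : F, s • u + t • w = 0 → s = 0 ∧ t = 0

def Ind3 {F E : Type} [Field F] [AddCommGroup E] [Module F E] (u w P : E) : Prop :=
  ∀ s t T : F, s • u + t • w + T • P = 0 → s = 0 ∧ t = 0 ∧ T = 0

namespace PD
variable {F E : Type} [Field F] [Fintype F] [AddCommGroup E] [Module F E] [Fintype E]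
    {p : ℕ} (D : PD F E p)

def G (y : E) : F := ∑ i ∈ D.I, D.a i * (D.l i y) ^ (p ^ 2 - 1)

def c (k : ℕ) (P v : E) : F :=
  ∑ i ∈ D.I, D.a i * (-(D.l i v)) ^ k * (D.l i P) ^ (p ^ 2 - 1 - k)

noncomputable def A (P v : E) : Finset F := univ.filter fun T => D.G (v + T • P) = 0

theorem g01 (y : E) : D.G y = 0 ∨ D.G y = 1 := D.h01 y

theorem g_ne (y : E) : D.G y ≠ 0 ↔ D.G y = 1 := by
  constructor
  · intro h; exact (D.g01 y).resolve_left h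
  · intro h; rw [h]; exact one_ne_zero

theorem Q_gt (D : PD F E p) : 25 ≤ p ^ 2 := by have := D.hp4; nlinarith

theorem mem_A {P v : E} {T : F} : T ∈ D.A P v ↔ D.G (v + T • P) = 0 := by simp [A]

theorem charP (D : PD F E p) : CharP F p := charP_F D.hp D.hF

theorem G_line (P v : E) (T : F) :
    D.G (v + T • P) = ∑ k ∈ range (p ^ 2), D.c k P v * T ^ (p ^ 2 - 1 - k) := by
  have := D.charP
  simp only [G, c, sum_mul]
  rw [sum_comm]
  refine sum_congr rfl fun i _ => ?_
  have h : D.l i (v + T • P) = T * D.l i P - (-(D.l i v)) := by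
    simp; ring
  rw [h, geom_sub D.hp 2 (by norm_num), mul_sum]
  refine sum_congr rfl fun k _ => ?_
  rw [mul_pow]; ring

theorem G_line_ite (P v : E) (T : F) :
    ∑ k ∈ range (p ^ 2), D.c k P v * T ^ (p ^ 2 - 1 - k) = if T ∈ D.A P v then 0 else 1 := by
  rw [← D.G_line]
  split_ifs with h
  · exact D.mem_A.1 h
  · exact (D.g_ne _).1 fun h' => h (D.mem_A.2 h')

theorem c_zero (P v : E) : D.c 0 P v = D.G P := by
  simp [c, G]

theorem card_A (P v : E) : ((D.A P v).card : F) = D.G P := by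
  have h := (line_coeff D.hp D.hF (fun k => D.c k P v) (D.A P v) (D.G_line_ite P v)).1 0
    (by have := D.Q_gt; omega)
  rw [D.c_zero] at h
  simpa using h.symm

theorem c_eq {P : E} (hP : D.G P = 1) (v : E) {k : ℕ} (hk : k < p ^ 2) :
    D.c k P v = ∑ x ∈ D.A P v, x ^ k := by
  have h := line_coeff D.hp D.hF (fun k => D.c k P v) (D.A P v) (D.G_line_ite P v)
  by_cases hk' : k < p ^ 2 - 1
  · exact h.1 k hk'
  · have : k = p ^ 2 - 1 := by omega
    subst this
    rw [h.2, D.card_A, hP, sub_self, zero_add]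

theorem c_pow {P : E} (hP : D.G P = 1) (v : E) {k m : ℕ} (hk : k < p ^ 2) (hm : m < p ^ 2)
    (h : ∀ x : F, x ^ (k * p) = x ^ m) :
    D.c k P v ^ p = D.c m P v := by
  have := D.charP
  have := Fact.mk D.hp
  rw [D.c_eq hP v hk, D.c_eq hP v hm, sum_pow_char]
  exact sum_congr rfl fun x _ => by rw [← pow_mul, h]

theorem pow_Q (D : PD F E p) (x : F) : x ^ (p ^ 2) = x := by rw [← D.hF]; exact FiniteField.pow_card x

theorem pow_Q1 (D : PD F E p) {x : F} (hx : x ≠ 0) : x ^ (p ^ 2 - 1) = 1 := by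
  rw [← D.hF]; exact FiniteField.pow_card_sub_one_eq_one x hx

theorem G_smul {s : F} (hs : s ≠ 0) (y : E) : D.G (s • y) = D.G y := by
  simp only [G, map_smul, smul_eq_mul, mul_pow, D.pow_Q1 hs, one_mul]

theorem G_zero : D.G 0 = 0 := by
  have : p ^ 2 - 1 ≠ 0 := by have := D.Q_gt; omega
  simp [G, this]

theorem A_zero_one {P : E} (hP : D.G P = 1) : D.A P 0 = {0} := by
  ext T
  rw [D.mem_A, zero_add, mem_singleton]
  constructor
  · intro h
    by_contra hT
    rw [D.G_smul hT, hP] at h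
    exact one_ne_zero h
  · rintro rfl; rw [zero_smul]; exact D.G_zero

theorem A_zero_zero {P : E} (hP : D.G P = 0) : D.A P 0 = univ := by
  ext T
  rw [D.mem_A, zero_add]
  simp only [mem_univ, iff_true]
  by_cases hT : T = 0
  · rw [hT, zero_smul]; exact D.G_zero
  · rw [D.G_smul hT, hP]

theorem c_one_add (P u w : E) : D.c 1 P (u + w) = D.c 1 P u + D.c 1 P w := by
  simp only [c, map_add, pow_one, neg_add, ← sum_add_distrib]
  exact sum_congr rfl fun _ _ => by ring

theorem c_one_smul (P u : E) (s : F) : D.c 1 P (s • u) = s * D.c 1 P u := by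
  simp only [c, map_smul, pow_one, mul_sum, smul_eq_mul]
  exact sum_congr rfl fun _ _ => by ring

theorem c_one_self (P : E) : D.c 1 P P = - D.G P := by
  simp only [c, G, ← sum_neg_distrib]
  refine sum_congr rfl fun i _ => ?_
  have : p ^ 2 - 1 = (p ^ 2 - 1 - 1) + 1 := by have := D.Q_gt; omega
  conv_rhs => rw [this, pow_succ]
  ring

theorem A_shift (P v : E) (τ T : F) : T ∈ D.A P (v + τ • P) ↔ T + τ ∈ D.A P v := by
  rw [D.mem_A, D.mem_A, add_smul, add_assoc, add_comm (τ • P)]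

theorem A_scale (P v : E) {s : F} (hs : s ≠ 0) (T : F) :
    T ∈ D.A P (s • v) ↔ T / s ∈ D.A P v := by
  rw [D.mem_A, D.mem_A, ← D.G_smul hs (v + _), smul_add, smul_smul, mul_div_cancel₀ _ hs]

theorem A_scale_card (P v : E) {s : F} (hs : s ≠ 0) : (D.A P (s • v)).card = (D.A P v).card := by
  apply card_bij (fun T _ => T / s)
  · intro T hT; exact (D.A_scale P v hs T).1 hT
  · intro x _ y _ h; exact (div_left_inj' hs).1 h
  · intro x hx
    refine ⟨x * s, ?_, by simp [hs]⟩
    rw [D.A_scale P v hs]; simpa [hs] using hx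

theorem c_form (k : ℕ) (P u w : E) :
    (fun x : F × F => D.c k P (x.1 • u + x.2 • w)) ∈ Form F k := by
  unfold c
  apply Form.sum
  intro i _
  have h := Form.const_mul (Form.pow (Form.lin (-(D.l i u)) (-(D.l i w))) k)
    (D.a i * (D.l i P) ^ (p ^ 2 - 1 - k))
  rw [mul_one] at h
  convert h using 1
  ext x
  simp only [map_add, map_smul, smul_eq_mul]
  have : -(x.1 * D.l i u + x.2 * D.l i w) = x.1 * -(D.l i u) + x.2 * -(D.l i w) := by ring
  rw [this]; ring

/-- cardinality of the zero sets mod `p`. -/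
theorem card_A_one {P : E} (hP : D.G P = 1) (v : E) : ∃ κ, (D.A P v).card = 1 + p * κ := by
  have := D.charP
  have h := D.card_A P v
  rw [hP] at h
  have h2 : (((D.A P v).card : ℕ) : F) = ((1 : ℕ) : F) := by rw [h]; simp
  have h3 := (CharP.natCast_eq_natCast F p).1 h2
  have h4 := Nat.div_add_mod (D.A P v).card p
  have h5 : (D.A P v).card % p = 1 := by
    rw [h3]; exact Nat.mod_eq_of_lt D.hp.one_lt
  exact ⟨(D.A P v).card / p, by omega⟩

theorem card_A_zero {P : E} (hP : D.G P = 0) (v : E) : ∃ κ, (D.A P v).card = p * κ := by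
  have := D.charP
  have h := D.card_A P v
  rw [hP] at h
  exact (CharP.cast_eq_zero_iff F p _).1 h

theorem card_A_le (P v : E) : (D.A P v).card ≤ p ^ 2 := by
  rw [← D.hF]; exact card_le_univ _

theorem bij (D : PD F E p) {u w P : E} (h : Ind3 (F := F) u w P) :
    Function.Bijective (fun x : (F × F) × F => x.1.1 • u + x.1.2 • w + x.2 • P) := by
  have := D.hE
  rw [Fintype.bijective_iff_injective_and_card]
  constructor
  · rintro ⟨⟨s, t⟩, T⟩ ⟨⟨s', t'⟩, T'⟩ he
    simp only at he
    have := h (s - s') (t - t') (T - T') (by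
      rw [← sub_eq_zero.2 he]; module)
    simp only [sub_eq_zero] at this
    simp [this]
  · rw [Fintype.card_prod, Fintype.card_prod, D.hF, D.hE]; ring

theorem total {u w P : E} (h : Ind3 (F := F) u w P) :
    (univ.filter fun y => D.G y = 0).card
      = ∑ x : F × F, (D.A P (x.1 • u + x.2 • w)).card := by
  have hb := D.bij h
  have e : ∀ x : F × F, (D.A P (x.1 • u + x.2 • w)).card
      = ∑ T : F, if D.G (x.1 • u + x.2 • w + T • P) = 0 then 1 else 0 := by
    intro x; rw [A, card_filter]
  simp only [e]
  rw [card_filter, ← Fintype.sum_prod_type' (f := fun (x : F × F) (T : F) =>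
    if D.G (x.1 • u + x.2 • w + T • P) = 0 then 1 else 0)]
  symm
  exact Function.Bijective.sum_comp hb (fun y => if D.G y = 0 then 1 else 0)

theorem card_ne (D : PD F E p) : (univ.filter fun t : F => t ≠ 0).card = p ^ 2 - 1 := by
  rw [filter_ne', card_erase_of_mem (mem_univ _), card_univ, D.hF]

theorem card_ne2 (D : PD F E p) : (univ.filter fun x : F × F => x ≠ 0).card = (p ^ 2) ^ 2 - 1 := by
  rw [filter_ne', card_erase_of_mem (mem_univ _), card_univ, Fintype.card_prod, D.hF, sq (p ^ 2)]

theorem line_count (X w : E) :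
    (univ.filter fun x : F × F => x ≠ 0 ∧ D.G (x.1 • X + x.2 • w) = 0).card
      = (p ^ 2 - 1) * ((D.A X w).card + if D.G X = 0 then 1 else 0) := by
  have hs : (univ.filter fun x : F × F => x ≠ 0 ∧ D.G (x.1 • X + x.2 • w) = 0) =
      (((D.A X w) ×ˢ (univ.filter fun t : F => t ≠ 0)).image fun y => (y.1 * y.2, y.2)) ∪
      ((univ.filter fun s : F => s ≠ 0 ∧ D.G X = 0).image fun s => (s, 0)) := by
    ext ⟨s, t⟩
    simp only [mem_filter, mem_univ, true_and, mem_union, mem_image, mem_product, Prod.mk.injEq,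
      Prod.exists, D.mem_A]
    constructor
    · rintro ⟨h1, h2⟩
      by_cases ht : t = 0
      · right
        subst ht
        have hs : s ≠ 0 := fun h => h1 (by rw [h]; rfl)
        refine ⟨s, ⟨hs, ?_⟩, rfl, rfl⟩
        rwa [zero_smul, add_zero, D.G_smul hs] at h2
      · left
        refine ⟨s / t, t, ⟨?_, ht⟩, by field_simp, rfl⟩
        rw [← D.G_smul ht, smul_add, smul_smul, mul_div_cancel₀ _ ht, add_comm]
        exact h2
    · rintro (⟨a, b, ⟨h1, h2⟩, rfl, rfl⟩ | ⟨a, ⟨h1, h2⟩, rfl, rfl⟩)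
      · refine ⟨fun h => h2 (congrArg Prod.snd h), ?_⟩
        rw [← D.G_smul h2, smul_add, smul_smul, add_comm] at h1
        rwa [mul_comm a b]
      · refine ⟨fun h => h1 (congrArg Prod.fst h), ?_⟩
        rw [zero_smul, add_zero, D.G_smul h1]
        exact h2
  rw [hs, card_union_of_disjoint, card_image_of_injOn, card_image_of_injective, card_product,
    D.card_ne]
  · by_cases h : D.G X = 0
    · simp only [h, and_true, if_true]
      rw [D.card_ne]; ring
    · simp [h]; ring
  · intro a b h; exact congrArg Prod.fst h
  · rintro ⟨a, b⟩ h ⟨a', b'⟩ h' he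
    simp only [coe_product, Set.mem_prod, mem_coe, mem_filter, mem_univ, true_and] at h h'
    simp only [Prod.mk.injEq] at he
    obtain ⟨he1, rfl⟩ := he
    rw [mul_left_inj' h.2] at he1
    rw [he1]
  · rw [disjoint_left]
    intro x hx hx'
    simp only [mem_image, mem_product, mem_filter, mem_univ, true_and] at hx hx'
    obtain ⟨y, hy, rfl⟩ := hx
    obtain ⟨z, hz, hz'⟩ := hx'
    exact hy.2 (congrArg Prod.snd hz').symm

theorem exists_ind2 (D : PD F E p) {P : E} (hP : P ≠ 0) : ∃ w, Ind2 (F := F) P w := by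
  have hns : ¬ Function.Surjective (fun s : F => s • P) := by
    intro h
    have h1 := Fintype.card_le_of_surjective _ h
    rw [D.hF, D.hE] at h1
    have := D.Q_gt
    nlinarith [sq_nonneg (p ^ 2 : ℤ)]
  obtain ⟨w, hw⟩ := not_forall.1 hns
  refine ⟨w, fun s t h => ?_⟩
  have ht : t = 0 := by
    by_contra ht
    refine hw ⟨-(t⁻¹ * s), ?_⟩
    have h2 : s • P = -(t • w) := eq_neg_of_add_eq_zero_left h
    simp only [neg_smul, mul_smul, h2, smul_neg, neg_neg, smul_smul, inv_mul_cancel₀ ht, one_smul]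
  subst ht
  simp [hP] at h
  exact ⟨h, rfl⟩

theorem exists_ind3 (D : PD F E p) {u w : E} (h : Ind2 (F := F) u w) : ∃ P, Ind3 (F := F) u w P := by
  have hns : ¬ Function.Surjective (fun s : F × F => s.1 • u + s.2 • w) := by
    intro h
    have h1 := Fintype.card_le_of_surjective _ h
    rw [Fintype.card_prod, D.hF, D.hE] at h1
    have := D.Q_gt
    nlinarith [sq_nonneg (p ^ 2 : ℤ)]
  obtain ⟨P, hP⟩ := not_forall.1 hns
  refine ⟨P, fun s t T hT => ?_⟩
  have hT0 : T = 0 := by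
    by_contra h0
    refine hP ⟨(-(T⁻¹ * s), -(T⁻¹ * t)), ?_⟩
    have h2 : s • u + t • w = -(T • P) := eq_neg_of_add_eq_zero_left hT
    have h3 : P = -(T⁻¹ • (s • u + t • w)) := by
      rw [h2, smul_neg, neg_neg, smul_smul, inv_mul_cancel₀ h0, one_smul]
    simp only
    conv_rhs => rw [h3]
    simp only [neg_smul, mul_smul, smul_add, neg_add]
  subst hT0
  rw [zero_smul, add_zero] at hT
  exact ⟨(h s t hT).1, (h s t hT).2, rfl⟩

theorem exists_one : ∃ P, D.G P = 1 := by
  by_contra h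
  push Not at h
  have h0 : ∀ y, D.G y = 0 := fun y => (D.g01 y).resolve_right (h y)
  have h1 := D.hsize
  have h2 : (univ.filter fun y => D.G y = 0).card = (p ^ 2) ^ 3 := by
    simp only [h0, filter_true, card_univ, D.hE]
  change (univ.filter fun y => D.G y = 0).card ≤ _ at h1
  rw [h2] at h1
  have h4 := D.hp4
  have : p ^ 2 - 1 + 1 = p ^ 2 := Nat.sub_add_cancel (by have := D.Q_gt; omega)
  have hle : (p ^ 3 + p ^ 2 + p + 1) * (p ^ 2 - 1) ≤ (p ^ 3 + p ^ 2 + p + 1) * p ^ 2 :=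
    Nat.mul_le_mul_left _ (by omega)
  have : (p ^ 3 + p ^ 2 + p + 1) * p ^ 2 + 1 < (p ^ 2) ^ 3 := by
    obtain ⟨k, rfl⟩ : ∃ k, p = k + 5 := ⟨p - 5, by omega⟩
    ring_nf; nlinarith [Nat.zero_le k]
  omega

theorem ne_zero_of_one {P : E} (hP : D.G P = 1) : P ≠ 0 := by
  rintro rfl
  rw [D.G_zero] at hP
  exact zero_ne_one hP

theorem bound {u w P : E} (h : Ind3 (F := F) u w P) (hP : D.G P = 1) :
    ∑ x ∈ univ.filter (fun x : F × F => x ≠ 0), (D.A P (x.1 • u + x.2 • w)).card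
      ≤ (p ^ 3 + p ^ 2 + p + 1) * (p ^ 2 - 1) := by
  have h1 := D.hsize
  change (univ.filter fun y => D.G y = 0).card ≤ _ at h1
  rw [D.total h, ← add_sum_erase _ _ (mem_univ (0 : F × F))] at h1
  simp only [Prod.fst_zero, Prod.snd_zero, zero_smul, add_zero, D.A_zero_one hP,
    card_singleton] at h1
  rw [filter_ne']
  omega

end PD
end P2
end QH

namespace QH
section P3
open scoped Classical
open Finset
variable {F : Type} [Field F]

noncomputable def rp (A : Finset F) : Polynomial F :=
  ∏ a ∈ A, (Polynomial.X - Polynomial.C a)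

noncomputable def rc (A : Finset F) (l : ℕ) : F := (rp A).coeff (A.card - l)

theorem rp_deg (A : Finset F) : (rp A).natDegree = A.card := by
  rw [rp, Polynomial.natDegree_finsetProd_X_sub_C_eq_card]

theorem rp_eval (A : Finset F) (T : F) : (rp A).eval T = ∏ a ∈ A, (T - a) := by
  simp [rp, Polynomial.eval_prod]

theorem rp_eval_eq_zero (A : Finset F) (T : F) : (rp A).eval T = 0 ↔ T ∈ A := by
  rw [rp_eval, prod_eq_zero_iff]
  constructor
  · rintro ⟨a, ha, h⟩; rwa [sub_eq_zero.1 h]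
  · intro h; exact ⟨T, h, sub_self T⟩

theorem rp_eval_sum (A : Finset F) (T : F) :
    (rp A).eval T = ∑ i ∈ range (A.card + 1), rc A i * T ^ (A.card - i) := by
  rw [Polynomial.eval_eq_sum_range, rp_deg, ← sum_range_reflect]
  refine sum_congr rfl fun i _ => ?_
  rw [rc]
  simp

theorem rc_zero (A : Finset F) : rc A 0 = 1 := by
  have h : (rp A).Monic := Polynomial.monic_prod_of_monic _ _ fun a _ => Polynomial.monic_X_sub_C a
  have := h.coeff_natDegree
  rw [rp_deg] at this
  simpa [rc] using this

theorem newton (A : Finset F) {l : ℕ} (hl : l ≤ A.card) :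
    (l : F) * rc A l = -∑ i ∈ range l, rc A i * ∑ a ∈ A, a ^ (l - i) := by
  have hr : ∀ i, i ≤ A.card → rc A i = (-1) ^ i * A.val.esymm i := by
    intro i hi
    have := Multiset.prod_X_sub_C_coeff A.val (k := A.card - i) (by simp)
    rw [rc, rp, Finset.prod_eq_multiset_prod, this]
    have e : Multiset.card A.val - (A.card - i) = i := by simp; omega
    rw [e]
  have hm : (univ : Finset A).val.map (fun x : A => (x : F)) = A.val := by
    have := Finset.attach_val A
    rw [← Finset.attach_eq_univ, this]
    exact Multiset.attach_map_val A.val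
  have he : ∀ i, MvPolynomial.aeval (fun x : A => (x : F)) (MvPolynomial.esymm A F i)
      = A.val.esymm i := by
    intro i
    rw [MvPolynomial.aeval_esymm_eq_multiset_esymm, hm]
  have hps : ∀ i, MvPolynomial.aeval (fun x : A => (x : F)) (MvPolynomial.psum A F i)
      = ∑ a ∈ A, a ^ i := by
    intro i
    simp only [MvPolynomial.psum, map_sum, map_pow, MvPolynomial.aeval_X]
    exact (Finset.sum_coe_sort A (fun a => a ^ i))
  have h := congrArg (MvPolynomial.aeval (fun x : A => (x : F)))
    (MvPolynomial.mul_esymm_eq_sum (σ := A) (R := F) l)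
  simp only [map_mul, map_natCast, map_pow, map_neg, map_one, map_sum, he, hps] at h
  rw [hr l hl, mul_left_comm, h, sum_filter,
    Finset.Nat.sum_antidiagonal_eq_sum_range_succ_mk, sum_range_succ, if_neg (by simp), add_zero,
    ← mul_assoc, ← pow_add, show l + (l + 1) = 2 * l + 1 by ring, pow_succ, pow_mul]
  simp only [even_two, Even.neg_pow, one_pow, one_mul, neg_mul, mul_neg]
  congr 1
  refine sum_congr rfl fun i hi => ?_
  have := mem_range.1 hi
  rw [if_pos (by simpa using this), hr i (by omega)]

theorem natCast_ne {p : ℕ} [CharP F p] {l : ℕ} (h1 : 0 < l) (h2 : l < p) : (l : F) ≠ 0 := by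
  rw [Ne, CharP.cast_eq_zero_iff F p]
  exact fun h => absurd (Nat.le_of_dvd h1 h) (by omega)

theorem rc_vanish {p : ℕ} [CharP F p] (A : Finset F) (hA : A.card = p + 1)
    (h0 : ∀ k, 1 ≤ k → k ≤ p - 1 → ∑ a ∈ A, a ^ k = 0) :
    ∀ l, 1 ≤ l → l ≤ p - 1 → rc A l = 0 := by
  intro l h1 h2
  have := newton A (l := l) (by omega)
  rw [sum_eq_zero, neg_zero] at this
  · exact (mul_eq_zero.1 this).resolve_left (natCast_ne (p := p) (by omega) (by omega))
  · intro i hi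
    have := mem_range.1 hi
    rw [h0 (l - i) (by omega) (by omega), mul_zero]

/-- The good line lemma. -/
theorem good_line [Fintype F] {p : ℕ} (hp : p.Prime) (hp4 : 4 < p) (hF : Fintype.card F = p ^ 2)
    (A : Finset F) (hA : A.card = p + 1)
    (h0 : ∀ k, 1 ≤ k → k ≤ p - 1 → ∑ a ∈ A, a ^ k = 0) :
    ∑ a ∈ A, a ^ (p + 1) ≠ 0 ∧ ∀ T, T ∈ A ↔ T ^ (p + 1) = ∑ a ∈ A, a ^ (p + 1) := by
  have := charP_F hp hF
  have := Fact.mk hp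
  have hr := rc_vanish A hA h0
  set S := ∑ a ∈ A, a ^ (p + 1) with hS
  set ε := rc A p with hε
  have hlast : rc A (p + 1) = - S := by
    have h := newton A (l := p + 1) (by omega)
    rw [sum_range_succ, add_tsub_cancel_left, h0 1 le_rfl (by omega), mul_zero, add_zero,
      show p = (p - 1) + 1 by omega, sum_range_succ', sum_eq_zero] at h
    · rw [show p - 1 + 1 = p by omega] at h
      rw [rc_zero, zero_add, one_mul, Nat.sub_zero] at h
      push_cast at h
      rw [CharP.cast_eq_zero F p, zero_add, one_mul] at h
      exact h
    · intro i hi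
      have := mem_range.1 hi
      rw [hr (i + 1) (by omega) (by omega), zero_mul]
  have hR : ∀ T, (rp A).eval T = T ^ (p + 1) + ε * T - S := by
    intro T
    rw [rp_eval_sum, hA, sum_range_succ, sum_range_succ, hlast]
    have e : range p = range ((p - 1) + 1) := by rw [show p - 1 + 1 = p by omega]
    rw [e, sum_range_succ', sum_eq_zero, rc_zero]
    · simp; ring
    · intro i hi
      have := mem_range.1 hi
      rw [hr (i + 1) (by omega) (by omega), zero_mul]
  have hroot : ∀ a ∈ A, a ^ (p + 1) = S - ε * a := by
    intro a ha
    have := (rp_eval_eq_zero A a).2 ha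
    rw [hR] at this
    linear_combination this
  have hQ : ∀ x : F, x ^ (p ^ 2) = x := fun x => by rw [← hF]; exact FiniteField.pow_card x
  have e1 : ∑ a ∈ A, a ^ (p + 2) = 0 := by
    have : ∀ a ∈ A, a ^ (p + 2) = S * a ^ 1 - ε * a ^ 2 := by
      intro a ha
      rw [show p + 2 = (p + 1) + 1 by ring, pow_succ, hroot a ha]; ring
    rw [sum_congr rfl this, sum_sub_distrib, ← mul_sum, ← mul_sum, h0 1 le_rfl (by omega),
      h0 2 (by omega) (by omega)]
    ring
  have e2 : ∑ a ∈ A, a ^ (2 * p + 1) = 0 := by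
    have := congrArg (· ^ p) e1
    simp only [sum_pow_char, zero_pow hp.ne_zero] at this
    rw [← this]
    refine sum_congr rfl fun a _ => ?_
    rw [← pow_mul, show (p + 2) * p = p ^ 2 + 2 * p by ring, pow_add a (p ^ 2), hQ, pow_succ]; ring
  have e3 : ∑ a ∈ A, a ^ (2 * p + 1) = - (ε * S) := by
    have h1 : ∀ a ∈ A, a ^ (2 * p + 1) = S * (a ^ 1) ^ p - ε * a ^ (p + 1) := by
      intro a ha
      rw [show 2 * p + 1 = (p + 1) + p by ring, pow_add]
      nth_rewrite 1 [hroot a ha]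
      rw [pow_one, pow_succ]; ring
    rw [sum_congr rfl h1, sum_sub_distrib, ← mul_sum, ← mul_sum, ← sum_pow_char,
      h0 1 le_rfl (by omega), zero_pow hp.ne_zero]
    ring
  rw [e2] at e3
  have hεS : ε * S = 0 := by linear_combination e3
  have hS0 : S ≠ 0 := by
    intro hS0
    have hsub : ∀ a ∈ A, a = 0 ∨ a ^ p = -ε := by
      intro a ha
      have := hroot a ha
      rw [hS0] at this
      by_cases ha0 : a = 0
      · exact Or.inl ha0
      · right
        apply mul_right_cancel₀ ha0
        rw [← pow_succ, this]; ring
    have hc : A.card ≤ 2 := by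
      have hinj : Set.InjOn (fun a : F => if a = 0 then (0 : ℕ) else 1) A := by
        intro a ha b hb hab
        simp only at hab
        by_cases ha0 : a = 0 <;> by_cases hb0 : b = 0
        · rw [ha0, hb0]
        · simp [ha0, hb0] at hab
        · simp [ha0, hb0] at hab
        · have h1 := (hsub a ha).resolve_left ha0
          have h2 := (hsub b hb).resolve_left hb0
          exact frobenius_inj F p (by simp only [frobenius_def]; rw [h1, h2])
      have := card_le_card_of_injOn (t := range 2) _ (by
        intro a _; simp only; split_ifs <;> simp) hinj
      simpa using this
    omega
  refine ⟨hS0, fun T => ?_⟩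
  have hε0 : ε = 0 := (mul_eq_zero.1 hεS).resolve_right hS0
  rw [← rp_eval_eq_zero, hR, hε0, zero_mul, add_zero, sub_eq_zero]

theorem second_deriv (A : Finset F) (x : F) (hx : x ∉ A) :
    (rp A).derivative.eval x = (rp A).eval x * (∑ a ∈ A, (x - a)⁻¹) ∧
    (rp A).derivative.derivative.eval x
      = (rp A).eval x * ((∑ a ∈ A, (x - a)⁻¹) ^ 2 - ∑ a ∈ A, ((x - a)⁻¹) ^ 2) := by
  induction A using Finset.induction_on with
  | empty => simp [rp]
  | insert b A hb ih =>
    rw [mem_insert, not_or] at hx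
    obtain ⟨ih1, ih2⟩ := ih hx.2
    have e : rp (insert b A) = (Polynomial.X - Polynomial.C b) * rp A := by
      rw [rp, prod_insert hb, rp]
    have hxb : x - b ≠ 0 := sub_ne_zero.2 hx.1
    rw [e, sum_insert hb, sum_insert hb]
    simp only [Polynomial.derivative_mul, Polynomial.derivative_add, Polynomial.derivative_sub,
      Polynomial.derivative_X, Polynomial.derivative_C, sub_zero,
      one_mul, Polynomial.eval_add, Polynomial.eval_mul, Polynomial.eval_sub,
      Polynomial.eval_X, Polynomial.eval_C, ih1, ih2]
    constructor
    · field_simp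
    · field_simp; ring

theorem cond_psum [Fintype F] {p : ℕ} (hp : p.Prime) (hp4 : 4 < p) (hF : Fintype.card F = p ^ 2)
    (A : Finset F) (hA : A.card = p + 1) (h1 : ∑ a ∈ A, a = 0)
    (h : ∀ x, x ∉ A → ∑ a ∈ A, ((a - x)⁻¹) ^ 2 = (∑ a ∈ A, (a - x)⁻¹) ^ 2) :
    ∀ k, 1 ≤ k → k ≤ p - 1 → ∑ a ∈ A, a ^ k = 0 := by
  have := charP_F hp hF
  have hd : (rp A).derivative.derivative = 0 := by
    apply Polynomial.eq_zero_of_natDegree_lt_card_of_eval_eq_zero' _ (univ \ A)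
    · intro x hx
      have hx : x ∉ A := by simpa using hx
      rw [(second_deriv A x hx).2]
      have e : ∀ a ∈ A, (x - a)⁻¹ = -(a - x)⁻¹ := by
        intro a _; rw [← neg_sub, inv_neg]
      have e2 : ∀ a ∈ A, ((x - a)⁻¹) ^ 2 = ((a - x)⁻¹) ^ 2 := by
        intro a ha; rw [e a ha, neg_sq]
      rw [sum_congr rfl e, sum_congr rfl e2, sum_neg_distrib, neg_sq]
      rw [h x hx]; ring
    · rw [card_sdiff_of_subset (subset_univ _), card_univ, hF, hA]
      have := Polynomial.natDegree_derivative_le (rp A)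
      have := Polynomial.natDegree_derivative_le (rp A).derivative
      rw [rp_deg] at *
      have : 5 * p ≤ p ^ 2 := by nlinarith
      omega
  have hc : ∀ l, 2 ≤ l → l ≤ p - 1 → rc A l = 0 := by
    intro l h2 h3
    have := congrArg (fun q => Polynomial.coeff q (p - 1 - l)) hd
    simp only [Polynomial.coeff_derivative, Polynomial.coeff_zero] at this
    rw [rc, hA, show p + 1 - l = p - 1 - l + 1 + 1 by omega]
    have n1 : ((p - 1 - l : ℕ) : F) + 1 ≠ 0 := by
      have := natCast_ne (F := F) (p := p) (l := p - 1 - l + 1) (by omega) (by omega)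
      push_cast at this; exact this
    have n2 : ((p - 1 - l + 1 : ℕ) : F) + 1 ≠ 0 := by
      have := natCast_ne (F := F) (p := p) (l := p - 1 - l + 1 + 1) (by omega) (by omega)
      push_cast at this ⊢; exact this
    exact (mul_eq_zero.1 ((mul_eq_zero.1 this).resolve_right n1)).resolve_right n2
  have hc1 : rc A 1 = 0 := by
    have := newton A (l := 1) (by omega)
    simpa [h1, rc_zero] using this
  intro k hk1 hk2
  have hn := newton A (l := k) (by omega)
  have hk : rc A k = 0 := by
    rcases Nat.lt_or_ge k 2 with h | h
    · rw [show k = 1 by omega]; exact hc1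
    · exact hc k h hk2
  obtain ⟨m, rfl⟩ : ∃ m, k = m + 1 := ⟨k - 1, by omega⟩
  rw [hk, mul_zero, sum_range_succ', sum_eq_zero, rc_zero] at hn
  · simp only [zero_add, one_mul, Nat.sub_zero] at hn
    exact neg_eq_zero.1 hn.symm
  · intro i hi
    have := mem_range.1 hi
    have : rc A (i + 1) = 0 := by
      rcases Nat.lt_or_ge (i + 1) 2 with h | h
      · rw [show i + 1 = 1 by omega]; exact hc1
      · exact hc _ h (by omega)
    rw [this, zero_mul]

end P3
end QH

namespace QH
section P4
open scoped Classical
open Finset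
namespace PD
variable {F E : Type} [Field F] [Fintype F] [AddCommGroup E] [Module F E] [Fintype E]
    {p : ℕ} (D : PD F E p)

/-- the conclusion at plane level -/
def Concl : Prop :=
  (∃ e : (Fin 3 → F) ≃ₗ[F] E, ∃ A : Matrix (Fin 3) (Fin 3) F, IsUnit A.det ∧
    Aᵀ = A.map (fun a => a ^ p) ∧
    ∀ y, D.G (e y) = 0 ↔ ∑ i, ∑ j, y i * A i j * (y j) ^ p = 0) ∨
  (∃ ℓ : Submodule F E, finrank F ℓ = 2 ∧ ∀ y, D.G y = 0 ↔ y ∈ ℓ) ∨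
  (∃ L : Finset (Submodule F E), L.card = p + 1 ∧ (∀ ℓ ∈ L, finrank F ℓ = 2) ∧
    (∃ R : E, R ≠ 0 ∧ ∀ ℓ ∈ L, R ∈ ℓ) ∧ ∀ y, D.G y = 0 ↔ ∃ ℓ ∈ L, y ∈ ℓ)

theorem _root_.QH.finrank_pair {x y : E} (h : Ind2 (F := F) x y) :
    finrank F (Submodule.span F {x, y}) = 2 := by
  have hli : LinearIndependent F ![x, y] := by
    rw [LinearIndependent.pair_iff]; exact h
  have := finrank_span_eq_card hli
  rw [Matrix.range_cons, Matrix.range_cons, Matrix.range_empty, Set.union_empty,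
    Set.singleton_union] at this
  simpa using this

theorem cone {v P R : E} (h : Ind3 (F := F) v P R) (hP : D.G P = 1)
    (hA : (D.A P v).card = p + 1)
    (hc : ∀ α β γ : F, D.G (α • v + β • P + γ • R) = 0 ↔ D.G (α • v + β • P) = 0) : D.Concl := by
  right; right
  have hinj : Function.Injective (fun a : F => Submodule.span F {v + a • P, R}) := by
    intro a b hab
    have h1 : v + b • P ∈ Submodule.span F {v + a • P, R} := by
      simp only at hab
      rw [hab]; exact Submodule.subset_span (by simp)
    obtain ⟨s, t, hst⟩ := Submodule.mem_span_pair.1 h1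
    have h2 := h (s - 1) (s * a - b) t (by
      rw [← sub_eq_zero.2 hst]; module)
    have hs : s = 1 := sub_eq_zero.1 h2.1
    rw [hs, one_mul] at h2
    exact sub_eq_zero.1 h2.2.1
  refine ⟨(D.A P v).image (fun a => Submodule.span F {v + a • P, R}), ?_, ?_, ⟨R, ?_, ?_⟩, ?_⟩
  · rw [card_image_of_injective _ hinj, hA]
  · intro ℓ hℓ
    obtain ⟨a, _, rfl⟩ := mem_image.1 hℓ
    apply finrank_pair
    intro s t hst
    have := h s (s * a) t (by rw [← hst]; module)
    exact ⟨this.1, this.2.2⟩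
  · rintro rfl
    have := h 0 0 1 (by simp)
    simp at this
  · intro ℓ hℓ
    obtain ⟨a, _, rfl⟩ := mem_image.1 hℓ
    exact Submodule.subset_span (by simp)
  · intro y
    constructor
    · intro hy
      obtain ⟨⟨⟨α, β⟩, γ⟩, rfl⟩ := (D.bij h).2 y
      simp only at hy ⊢
      rw [hc] at hy
      by_cases hα : α = 0
      · have hne : (D.A P v).Nonempty := by rw [← card_pos, hA]; omega
        obtain ⟨a, ha⟩ := hne
        refine ⟨_, mem_image_of_mem _ ha, ?_⟩
        have hβ : β = 0 := by
          by_contra hβ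
          rw [hα, zero_smul, zero_add, D.G_smul hβ, hP] at hy
          exact one_ne_zero hy
        rw [hα, hβ, zero_smul, zero_smul, zero_add, zero_add]
        exact Submodule.smul_mem _ _ (Submodule.subset_span (by simp))
      · have ha : β / α ∈ D.A P v := by
          rw [D.mem_A, ← D.G_smul hα, smul_add, smul_smul, mul_div_cancel₀ _ hα]
          exact hy
        refine ⟨_, mem_image_of_mem _ ha, ?_⟩
        rw [Submodule.mem_span_pair]
        refine ⟨α, γ, ?_⟩
        rw [smul_add, smul_smul, mul_div_cancel₀ _ hα]
    · rintro ⟨ℓ, hℓ, hy⟩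
      obtain ⟨a, ha, rfl⟩ := mem_image.1 hℓ
      obtain ⟨s, t, rfl⟩ := Submodule.mem_span_pair.1 hy
      have e : s • (v + a • P) + t • R = s • v + (s * a) • P + t • R := by module
      rw [e, hc]
      have e : s • v + (s * a) • P = s • (v + a • P) := by module
      rw [e]
      by_cases hs : s = 0
      · rw [hs, zero_smul]; exact D.G_zero
      · rw [D.G_smul hs]; exact D.mem_A.1 ha

theorem c2_shift {P : E} (hP : D.G P = 1) (v : E) :
    D.c 2 P (v + D.c 1 P v • P) = D.c 2 P v - D.c 1 P v ^ 2 := by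
  have hQ := D.Q_gt
  set τ := D.c 1 P v with hτ
  have hcard := D.card_A P v
  rw [hP] at hcard
  have h1 := D.c_eq hP v (k := 1) (by omega)
  have h2 := D.c_eq hP v (k := 2) (by omega)
  have hs : ∑ x ∈ D.A P (v + τ • P), x ^ 2 = ∑ x ∈ D.A P v, (x - τ) ^ 2 := by
    refine sum_bij (fun x _ => x + τ) (fun x hx => (D.A_shift P v τ x).1 hx) ?_ ?_ ?_
    · intro x _ y _ h; exact add_right_cancel h
    · intro y hy
      refine ⟨y - τ, ?_, by ring⟩
      rw [D.A_shift]; simpa using hy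
    · intro x _; ring
  rw [D.c_eq hP _ (k := 2) (by omega), hs, h2]
  have e : ∀ x ∈ D.A P v, (x - τ) ^ 2 = x ^ 2 - 2 * τ * x ^ 1 + τ ^ 2 := fun x _ => by ring
  rw [sum_congr rfl e, sum_add_distrib, sum_sub_distrib, ← mul_sum, ← h1, ← hτ, sum_const,
    nsmul_eq_mul, hcard]
  ring

theorem ker_shift {P : E} (hP : D.G P = 1) (v : E) : D.c 1 P (v + D.c 1 P v • P) = 0 := by
  rw [D.c_one_add, D.c_one_smul, D.c_one_self, hP]; ring

theorem ind3_shift {u w P : E} (h : Ind3 (F := F) u w P) (α β : F) :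
    Ind3 (F := F) (u + α • P) (w + β • P) P := by
  intro s t T hT
  have := h s t (s * α + t * β + T) (by rw [← hT]; module)
  obtain ⟨rfl, rfl, h3⟩ := this
  simpa using h3

theorem ind3_rot {u w P : E} (h : Ind3 (F := F) u w P) : Ind3 (F := F) w P u := by
  intro s t T hT
  have := h T s t (by rw [← hT]; module)
  exact ⟨this.2.1, this.2.2, this.1⟩

theorem exists_ker {P : E} (hP : D.G P = 1) :
    ∃ u w, Ind3 (F := F) u w P ∧ D.c 1 P u = 0 ∧ D.c 1 P w = 0 := by
  obtain ⟨u, hu⟩ := D.exists_ind2 (D.ne_zero_of_one hP)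
  obtain ⟨w, hw⟩ := D.exists_ind3 hu
  exact ⟨_, _, ind3_shift (ind3_rot hw) _ _, D.ker_shift hP u, D.ker_shift hP w⟩

theorem c_one_V {u w P : E} (hu : D.c 1 P u = 0) (hw : D.c 1 P w = 0) (x : F × F) :
    D.c 1 P (x.1 • u + x.2 • w) = 0 := by
  rw [D.c_one_add, D.c_one_smul, D.c_one_smul, hu, hw]; ring

noncomputable def kap (P v : E) : ℕ := ((D.A P v).card - 1) / p

theorem card_kap {P : E} (hP : D.G P = 1) (v : E) : (D.A P v).card = 1 + p * D.kap P v := by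
  obtain ⟨k, hk⟩ := D.card_A_one hP v
  rw [kap, hk, Nat.add_sub_cancel_left, Nat.mul_div_cancel_left _ D.hp.pos]

theorem kap_smul (P v : E) {s : F} (hs : s ≠ 0) : D.kap P (s • v) = D.kap P v := by
  rw [kap, D.A_scale_card P v hs, kap]

theorem tangent {P v : E} (hP : D.G P = 1) (hk : D.kap P v = 0) (h1 : D.c 1 P v = 0) :
    D.A P v = {0} := by
  have h := D.card_kap hP v
  rw [hk, mul_zero, add_zero, card_eq_one] at h
  obtain ⟨b, hb⟩ := h
  have h2 := D.c_eq hP v (k := 1) (by have := D.Q_gt; omega)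
  rw [h1, hb, sum_singleton, pow_one] at h2
  rw [hb, ← h2]

theorem tangent_c {P v : E} (hP : D.G P = 1) (hk : D.kap P v = 0) (h1 : D.c 1 P v = 0) {k : ℕ}
    (hk1 : 1 ≤ k) (hk2 : k < p ^ 2) : D.c k P v = 0 := by
  rw [D.c_eq hP v hk2, D.tangent hP hk h1, sum_singleton, zero_pow (by omega)]

noncomputable def tanS (P u w : E) : Finset (F × F) :=
  univ.filter fun x => x ≠ 0 ∧ D.kap P (x.1 • u + x.2 • w) = 0

noncomputable def badS (P u w : E) : Finset (F × F) :=
  univ.filter fun x => x ≠ 0 ∧ 2 ≤ D.kap P (x.1 • u + x.2 • w)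

noncomputable def goodS (P u w : E) : Finset (F × F) :=
  univ.filter fun x => x ≠ 0 ∧ D.kap P (x.1 • u + x.2 • w) ≤ 1

theorem good_add_bad (P u w : E) :
    (D.goodS P u w).card + (D.badS P u w).card = (p ^ 2) ^ 2 - 1 := by
  rw [← D.card_ne2, goodS, badS, ← filter_filter, ← filter_filter,
    ← card_filter_add_card_filter_not (s := univ.filter fun x : F × F => x ≠ 0)
      (fun x => D.kap P (x.1 • u + x.2 • w) ≤ 1)]
  congr 2
  apply filter_congr
  intro x _
  omega

theorem sum_kap {u w P : E} (h : Ind3 (F := F) u w P) (hP : D.G P = 1) :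
    ∑ x ∈ univ.filter (fun x : F × F => x ≠ 0), D.kap P (x.1 • u + x.2 • w)
      ≤ (p ^ 2) ^ 2 - 1 := by
  have hb := D.bound h hP
  have e : ∀ x ∈ univ.filter (fun x : F × F => x ≠ 0), (D.A P (x.1 • u + x.2 • w)).card
    = 1 + p * D.kap P (x.1 • u + x.2 • w) := fun x _ => D.card_kap hP _
  rw [sum_congr rfl e, sum_add_distrib, ← mul_sum, sum_const, D.card_ne2, smul_eq_mul,
    mul_one] at hb
  have hQ := D.Q_gt
  have hp := D.hp.pos
  obtain ⟨m, hm⟩ : ∃ m, p ^ 2 = m + 1 := ⟨p ^ 2 - 1, by omega⟩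
  have e3 : p ^ 3 = p * p ^ 2 := by ring
  rw [e3, hm] at hb
  rw [hm]
  have e4 : (m + 1) ^ 2 - 1 = m * (m + 2) := by
    rw [show (m + 1) ^ 2 = m * (m + 2) + 1 by ring]; omega
  rw [e4] at hb ⊢
  simp only [Nat.add_sub_cancel] at hb
  have : p * ∑ x ∈ univ.filter (fun x : F × F => x ≠ 0), D.kap P (x.1 • u + x.2 • w)
      ≤ p * (m * (m + 2)) := by nlinarith
  exact Nat.le_of_mul_le_mul_left this hp

theorem excess {u w P : E} (h : Ind3 (F := F) u w P) (hP : D.G P = 1) :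
    ∑ x ∈ univ.filter (fun x : F × F => x ≠ 0), (D.kap P (x.1 • u + x.2 • w) - 1)
      ≤ (D.tanS P u w).card := by
  have h1 := D.sum_kap h hP
  have h2 : (D.tanS P u w).card = ∑ x ∈ univ.filter (fun x : F × F => x ≠ 0),
      if D.kap P (x.1 • u + x.2 • w) = 0 then 1 else 0 := by
    rw [tanS, ← filter_filter, card_filter]
  have h3 : ∑ x ∈ univ.filter (fun x : F × F => x ≠ 0), D.kap P (x.1 • u + x.2 • w)
      + (D.tanS P u w).card = ∑ x ∈ univ.filter (fun x : F × F => x ≠ 0),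
        (D.kap P (x.1 • u + x.2 • w) - 1) + ((p ^ 2) ^ 2 - 1) := by
    rw [h2, ← D.card_ne2, card_eq_sum_ones, ← sum_add_distrib, ← sum_add_distrib]
    refine sum_congr rfl fun x _ => ?_
    split_ifs <;> omega
  omega

/-- if all bad points have `κ ≥ m+1` then `m * bad ≤ tan`. -/
theorem bad_le {u w P : E} (h : Ind3 (F := F) u w P) (hP : D.G P = 1) (m : ℕ)
    (hm : ∀ x ∈ D.badS P u w, m + 1 ≤ D.kap P (x.1 • u + x.2 • w)) :
    m * (D.badS P u w).card ≤ (D.tanS P u w).card := by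
  refine le_trans ?_ (D.excess h hP)
  have h2 : m * (D.badS P u w).card = ∑ x ∈ D.badS P u w, m := by
    rw [sum_const, smul_eq_mul, mul_comm]
  rw [h2]
  calc ∑ x ∈ D.badS P u w, m
      ≤ ∑ x ∈ D.badS P u w, (D.kap P (x.1 • u + x.2 • w) - 1) :=
        sum_le_sum fun x hx => by have := hm x hx; omega
    _ ≤ _ := by
        apply sum_le_sum_of_subset
        intro x hx
        simp only [badS, mem_filter, mem_univ, true_and] at hx ⊢
        exact hx.1

theorem bad_le_tan {u w P : E} (h : Ind3 (F := F) u w P) (hP : D.G P = 1) :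
    (D.badS P u w).card ≤ (D.tanS P u w).card := by
  have := D.bad_le h hP 1 (fun x hx => by
    simp only [badS, mem_filter, mem_univ, true_and] at hx; omega)
  omega

end PD
end P4
end QH

namespace QH
section P5
open scoped Classical
open Finset

noncomputable def gam {F : Type} [Field F] (p : ℕ) (y : F) (k : ℕ) : F :=
  if p + 1 ∣ k then y ^ (k / (p + 1)) else 0

theorem gam_sum {F : Type} [Field F] {p : ℕ} (hp : p.Prime) [CharP F p] (y T : F) :
    ∑ k ∈ range (p ^ 2), gam p y k * T ^ (p ^ 2 - 1 - k) = (T ^ (p + 1) - y) ^ (p - 1) := by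
  have h1 := geom_sub hp 1 one_ne_zero (T ^ (p + 1)) y
  rw [pow_one] at h1
  rw [h1]
  have hsub : (range p).image (fun j => (p + 1) * j) ⊆ range (p ^ 2) := by
    intro k hk
    obtain ⟨j, hj, rfl⟩ := mem_image.1 hk
    have hj := mem_range.1 hj
    rw [mem_range]
    obtain ⟨m, hm⟩ : ∃ m, p = j + 1 + m := ⟨p - j - 1, by omega⟩
    rw [hm]; nlinarith [Nat.zero_le (j * m), Nat.zero_le m]
  rw [← sum_subset hsub, sum_image]
  · refine sum_congr rfl fun j hj => ?_
    have hj := mem_range.1 hj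
    rw [gam, if_pos (dvd_mul_right _ _), Nat.mul_div_cancel_left _ (by omega), ← pow_mul, mul_comm]
    congr 2
    obtain ⟨m, hm⟩ : ∃ m, p = j + 1 + m := ⟨p - j - 1, by omega⟩
    have : p - 1 - j = m := by omega
    rw [this]
    have e : p ^ 2 = 1 + (p + 1) * j + (p + 1) * m := by rw [hm]; ring
    omega
  · intro a _ b _ h
    exact Nat.eq_of_mul_eq_mul_left (by omega) h
  · intro k hk hk'
    rw [gam, if_neg, zero_mul]
    rintro ⟨j, rfl⟩
    apply hk'
    refine mem_image.2 ⟨j, ?_, rfl⟩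
    have := mem_range.1 hk
    rw [mem_range]
    by_contra hj
    push Not at hj
    nlinarith

namespace PD
variable {F E : Type} [Field F] [Fintype F] [AddCommGroup E] [Module F E] [Fintype E]
    {p : ℕ} (D : PD F E p)

def Cond (P : E) : Prop := ∀ v, D.c 2 P v = D.c 1 P v ^ 2

theorem A_swap {P v : E} (hP : D.G P = 1) {x : F} (hx : x ∉ D.A P v) :
    D.A (v + x • P) P = (D.A P v).image (fun a => (a - x)⁻¹) := by
  ext T
  rw [mem_image, D.mem_A]
  constructor
  · intro h
    have hT : T ≠ 0 := by
      rintro rfl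
      rw [zero_smul, add_zero, hP] at h
      exact one_ne_zero h
    refine ⟨T⁻¹ + x, ?_, by simp⟩
    rw [D.mem_A, ← D.G_smul hT]
    rw [← h]; congr 1
    simp only [smul_add, smul_smul, add_smul, mul_inv_cancel₀ hT, one_smul]
    module
  · rintro ⟨a, ha, rfl⟩
    have hax : a - x ≠ 0 := sub_ne_zero.2 fun h => hx (h ▸ ha)
    rw [D.mem_A, ← D.G_smul (inv_ne_zero hax)] at ha
    rw [← ha]; congr 1
    have : P = (a - x)⁻¹ • ((a - x) • P) := by rw [smul_smul, inv_mul_cancel₀ hax, one_smul]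
    nth_rewrite 1 [this]
    rw [← smul_add]; congr 1; module

theorem step1 (hB : ∀ P, D.G P = 1 → D.Cond P) {P v : E} (hP : D.G P = 1) (h1 : D.c 1 P v = 0)
    (hk : D.kap P v ≤ 1) {k : ℕ} (hk1 : 1 ≤ k) (hk2 : k ≤ p - 1) : D.c k P v = 0 := by
  have hQ := D.Q_gt
  have hpQ : p < p ^ 2 := by nlinarith [D.hp4]
  rcases Nat.lt_or_ge (D.kap P v) 1 with h0 | h0
  · exact D.tangent_c hP (by omega) h1 hk1 (by omega)
  · have hc := D.card_kap hP v
    rw [show D.kap P v = 1 by omega] at hc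
    rw [D.c_eq hP v (by omega)]
    refine cond_psum D.hp D.hp4 D.hF _ (by omega) ?_ ?_ k hk1 hk2
    · have := D.c_eq hP v (k := 1) (by omega)
      rw [h1] at this
      simpa using this.symm
    · intro x hx
      have hP' : D.G (v + x • P) = 1 := (D.g_ne _).1 fun h => hx (D.mem_A.2 h)
      have h := hB _ hP' P
      rw [D.c_eq hP' P (k := 1) (by omega), D.c_eq hP' P (k := 2) (by omega), D.A_swap hP hx,
        sum_image, sum_image] at h
      · simpa using h
      all_goals
        intro a _ b _ hab
        simpa using hab

theorem tan_sub_good (P u w : E) : (D.tanS P u w) ⊆ (D.goodS P u w) := by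
  intro x hx
  simp only [tanS, goodS, mem_filter, mem_univ, true_and] at hx ⊢
  exact ⟨hx.1, by omega⟩

theorem form_zero {k : ℕ} {f : F × F → F} (hf : f ∈ Form F k) (D : PD F E p) (S : Finset (F × F))
    (hS : ∀ x ∈ S, x ≠ 0 ∧ f x = 0) (h : k * (p ^ 2 - 1) < S.card) : ∀ x, f x = 0 := by
  apply Form.eq_zero hf
  rw [D.hF]
  refine lt_of_lt_of_le h (card_le_card fun x hx => ?_)
  simpa using hS x hx

theorem step2 (hB : ∀ P, D.G P = 1 → D.Cond P) {u w P : E} (h : Ind3 (F := F) u w P)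
    (hP : D.G P = 1)
    (hu : D.c 1 P u = 0) (hw : D.c 1 P w = 0) {k : ℕ} (hk1 : 1 ≤ k) (hk2 : k ≤ p - 1)
    (x : F × F) : D.c k P (x.1 • u + x.2 • w) = 0 := by
  refine form_zero (D.c_form k P u w) D (D.goodS P u w) ?_ ?_ x
  · intro x hx
    simp only [goodS, mem_filter, mem_univ, true_and] at hx
    exact ⟨hx.1, D.step1 hB hP (D.c_one_V hu hw x) hx.2 hk1 hk2⟩
  · have h1 := D.good_add_bad P u w
    have h2 := D.bad_le_tan h hP
    have h3 := card_le_card (D.tan_sub_good P u w)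
    have hQ := D.Q_gt
    have h4 := D.hp4
    obtain ⟨m, hm⟩ : ∃ m, p ^ 2 = m + 1 := ⟨p ^ 2 - 1, by omega⟩
    rw [hm] at h1 ⊢
    have e4 : (m + 1) ^ 2 - 1 = m * (m + 2) := by
      rw [show (m + 1) ^ 2 = m * (m + 2) + 1 by ring]; omega
    rw [e4] at h1
    simp only [Nat.add_sub_cancel]
    have : 2 * k < m + 2 := by
      have : 2 * p ≤ p ^ 2 := by nlinarith
      omega
    have : 2 * k * m < m * (m + 2) := by
      rw [mul_comm m]; exact Nat.mul_lt_mul_of_pos_right this (by omega)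
    nlinarith

/-- The conclusion of step 3. -/
theorem step3 {P v : E} (hP : D.G P = 1) (h0 : ∀ k, 1 ≤ k → k ≤ p - 1 → D.c k P v = 0)
    (hk : D.kap P v ≤ 1) : (D.kap P v = 1 → D.c (p + 1) P v ≠ 0) ∧
    ∀ T, T ∈ D.A P v ↔ T ^ (p + 1) = D.c (p + 1) P v := by
  have hQ := D.Q_gt
  have hpQ : p + 1 < p ^ 2 := by nlinarith [D.hp4]
  have h4 := D.hp4
  rcases Nat.lt_or_ge (D.kap P v) 1 with hk0 | hk0
  · refine ⟨fun h => by omega, fun T => ?_⟩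
    have h1 := h0 1 le_rfl (by omega)
    rw [D.tangent hP (by omega) h1, D.tangent_c hP (by omega) h1 (by omega) hpQ, mem_singleton,
      pow_eq_zero_iff (by omega)]
  · have hc := D.card_kap hP v
    rw [show D.kap P v = 1 by omega] at hc
    have := good_line D.hp D.hp4 D.hF (D.A P v) (by omega) (fun k h1 h2 => by
      rw [← D.c_eq hP v (by omega)]; exact h0 k h1 h2)
    rw [← D.c_eq hP v hpQ] at this
    exact ⟨fun _ => this.1, this.2⟩

theorem y_fix {P : E} (hP : D.G P = 1) (v : E) : D.c (p + 1) P v ^ p = D.c (p + 1) P v := by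
  have hpQ : p + 1 < p ^ 2 := by nlinarith [D.hp4]
  refine D.c_pow hP v hpQ hpQ fun x => ?_
  rw [show (p + 1) * p = p ^ 2 + p by ring, pow_add, D.pow_Q, pow_succ]; ring

theorem B_ite {y : F} (hy : y ^ p = y) (D : PD F E p) (T : F) :
    (T ^ (p + 1) - y) ^ (p - 1) = if T ^ (p + 1) = y then 0 else 1 := by
  have := D.charP
  have := Fact.mk D.hp
  have h4 := D.hp4
  split_ifs with h
  · rw [h, sub_self, zero_pow (by omega)]
  · have hne : T ^ (p + 1) - y ≠ 0 := sub_ne_zero.2 h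
    apply mul_right_cancel₀ hne
    rw [← pow_succ, Nat.sub_add_cancel (by omega), sub_pow_char, hy, ← pow_mul,
      show (p + 1) * p = p ^ 2 + p by ring, pow_add, D.pow_Q, one_mul, pow_succ]; ring

theorem step3' {P v : E} (hP : D.G P = 1) (h0 : ∀ k, 1 ≤ k → k ≤ p - 1 → D.c k P v = 0)
    (hk : D.kap P v ≤ 1) {k : ℕ} (hk2 : k < p ^ 2) :
    D.c k P v = gam p (D.c (p + 1) P v) k := by
  have := D.charP
  refine coeff_unique D.hF (fun k => D.c k P v) (fun k => gam p (D.c (p + 1) P v) k) ?_ k hk2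
  intro T
  rw [D.G_line_ite, gam_sum D.hp, B_ite (D.y_fix hP v) D]
  simp only [(D.step3 hP h0 hk).2 T]

theorem big_A {P v : E} (hP : D.G P = 1) (hk : D.kap P v ≠ 0) {k₀ : ℕ} (hk0 : k₀ < p ^ 2)
    (h0 : ∀ k, 1 ≤ k → k < k₀ → D.c k P v = 0) (h1 : 1 ≤ k₀) : k₀ ≤ (D.A P v).card := by
  by_contra hlt
  push Not at hlt
  have hQ := D.Q_gt
  have hline : ∀ T : F, (if T ∈ D.A P v then (0 : F) else 1)
      = T ^ (p ^ 2 - 1) + ∑ k ∈ Ico k₀ (p ^ 2), D.c k P v * T ^ (p ^ 2 - 1 - k) := by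
    intro T
    rw [← D.G_line_ite, ← sum_range_add_sum_Ico _ hk0.le]
    congr 1
    obtain ⟨m, rfl⟩ : ∃ m, k₀ = m + 1 := ⟨k₀ - 1, by omega⟩
    rw [sum_range_succ', sum_eq_zero, D.c_zero, hP]
    · simp
    · intro i hi
      have := mem_range.1 hi
      rw [h0 (i + 1) (by omega) (by omega), zero_mul]
  have hq : ∑ k ∈ Ico k₀ (p ^ 2),
      Polynomial.C (D.c k P v) * Polynomial.X ^ (p ^ 2 - 1 - k) = 0 := by
    apply Polynomial.eq_zero_of_natDegree_lt_card_of_eval_eq_zero' _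
      (univ.filter fun T : F => T ≠ 0 ∧ T ∉ D.A P v)
    · intro T hT
      simp only [mem_filter, mem_univ, true_and] at hT
      simp only [Polynomial.eval_finsetSum, Polynomial.eval_mul, Polynomial.eval_C,
        Polynomial.eval_pow, Polynomial.eval_X]
      have := hline T
      rw [if_neg hT.2, D.pow_Q1 hT.1] at this
      linear_combination -this
    · have hdeg : (∑ k ∈ Ico k₀ (p ^ 2),
          Polynomial.C (D.c k P v) * Polynomial.X ^ (p ^ 2 - 1 - k)).natDegree ≤ p ^ 2 - 1 - k₀ := by
        refine Polynomial.natDegree_sum_le_of_forall_le _ _ ?_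
        intro k hk
        have := mem_Ico.1 hk
        exact (Polynomial.natDegree_C_mul_X_pow_le _ _).trans (by omega)
      have hc : p ^ 2 ≤ (univ.filter fun T : F => T ≠ 0 ∧ T ∉ D.A P v).card
          + (D.A P v).card + 1 := by
        have hsub : (univ : Finset F) ⊆ (univ.filter fun T : F => T ≠ 0 ∧ T ∉ D.A P v)
            ∪ D.A P v ∪ {0} := by
          intro T _
          simp only [mem_union, mem_filter, mem_univ, true_and, mem_singleton]
          tauto
        have h := card_le_card hsub
        rw [card_univ, D.hF] at h
        refine h.trans ((card_union_le _ _).trans ?_)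
        rw [card_singleton]
        have := card_union_le (univ.filter fun T : F => T ≠ 0 ∧ T ∉ D.A P v) (D.A P v)
        omega
      omega
  have hA : D.A P v ⊆ {0} := by
    intro T hT
    rw [mem_singleton]
    by_contra hT0
    have h2 := hline T
    have h3 := congrArg (Polynomial.eval T) hq
    simp only [Polynomial.eval_finsetSum, Polynomial.eval_mul, Polynomial.eval_C,
        Polynomial.eval_pow, Polynomial.eval_X, Polynomial.eval_zero] at h3
    rw [h3, if_pos hT, D.pow_Q1 hT0, add_zero] at h2
    exact zero_ne_one h2
  have h5 := card_le_card hA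
  rw [card_singleton, D.card_kap hP] at h5
  have : p * D.kap P v = 0 := by omega
  rcases Nat.mul_eq_zero.1 this with h | h
  · exact D.hp.ne_zero h
  · exact hk h

end PD
end P5
end QH

namespace QH
section P6
open scoped Classical
open Finset
namespace PD
variable {F E : Type} [Field F] [Fintype F] [AddCommGroup E] [Module F E] [Fintype E]
    {p : ℕ} (D : PD F E p)

theorem sqm1 (m : ℕ) : (m + 1) ^ 2 - 1 = (m + 2) * m := by
  rw [show (m + 1) ^ 2 = (m + 2) * m + 1 by ring]; omega

theorem arith1 {p k m : ℕ} (hp : 4 < p) (h1 : k ≤ p ^ 2 - p - 1) (h2 : p ^ 2 + 1 ≤ 2 * k)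
    (h3 : k - 1 ≤ p * m) (h4 : m * (p ^ 2 + 1 - k) ≤ p ^ 2 + 1) : False := by
  have hpp : 5 * p ≤ p ^ 2 := by nlinarith
  obtain ⟨Y, hY⟩ : ∃ Y, p ^ 2 + 1 = k + Y := ⟨p ^ 2 + 1 - k, by omega⟩
  have e : p ^ 2 + 1 - k = Y := by omega
  rw [e] at h4
  rcases Nat.lt_or_ge Y (p + 3) with hlt | hge
  · have hY2 : Y = p + 2 := by omega
    subst hY2
    have hm : p - 1 ≤ m := by
      by_contra hm
      have : p * m ≤ p * (p - 2) := Nat.mul_le_mul_left _ (by omega)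
      have e2 : p * (p - 2) + 2 * p = p ^ 2 := by
        obtain ⟨q, rfl⟩ : ∃ q, p = q + 2 := ⟨p - 2, by omega⟩
        simp; ring
      omega
    have : (p - 1) * (p + 2) ≤ m * (p + 2) := Nat.mul_le_mul_right _ hm
    obtain ⟨q, rfl⟩ : ∃ q, p = q + 1 := ⟨p - 1, by omega⟩
    simp only [Nat.add_sub_cancel] at this
    nlinarith
  · have h5 : (k - 1) * Y ≤ p * (p ^ 2 + 1) := by
      calc (k - 1) * Y ≤ (p * m) * Y := Nat.mul_le_mul_right _ h3
        _ = p * (m * Y) := by ring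
        _ ≤ _ := Nat.mul_le_mul_left _ h4
    obtain ⟨K, rfl⟩ : ∃ K, k = K + 1 := ⟨k - 1, by omega⟩
    simp only [Nat.add_sub_cancel] at h5
    -- K + Y = p^2, p+3 ≤ Y ≤ K+1
    have hK : K + Y = p ^ 2 := by omega
    have hYK : Y ≤ K + 1 := by omega
    obtain ⟨a, rfl⟩ : ∃ a, Y = p + 3 + a := ⟨Y - (p + 3), by omega⟩
    obtain ⟨b, rfl⟩ : ∃ b, K = p + 2 + a + b := ⟨K - (p + 2 + a), by omega⟩
    obtain ⟨q, rfl⟩ : ∃ q, p = q + 5 := ⟨p - 5, by omega⟩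
    have h6 : 2 * a + b + (2 * (q + 5) + 5) = (q + 5) ^ 2 := by omega
    have h7 : (q + 5 + 2 + a + b) * (q + 5 + 3 + a)
      ≤ (q + 5) * (2 * a + b + (2 * (q + 5) + 5) + 1) := by rw [h6]; exact h5
    nlinarith [Nat.zero_le (a * b), Nat.zero_le (a * a), Nat.zero_le (a * q), Nat.zero_le (b * q)]

/-- Step 4. -/
theorem step4 (hB : ∀ P, D.G P = 1 → D.Cond P) {u w P : E} (h : Ind3 (F := F) u w P)
    (hP : D.G P = 1)
    (hu : D.c 1 P u = 0) (hw : D.c 1 P w = 0) {k : ℕ} (hk : k ≤ p ^ 2 - p - 1)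
    (x : F × F) : D.c k P (x.1 • u + x.2 • w) = gam p (D.c (p + 1) P (x.1 • u + x.2 • w)) k := by
  have hQ := D.Q_gt
  have h4 := D.hp4
  have hpp : 5 * p ≤ p ^ 2 := by nlinarith
  have hc0 : ∀ (x : F × F) (k : ℕ), 1 ≤ k → k ≤ p - 1 → D.c k P (x.1 • u + x.2 • w) = 0 :=
    fun x k h1 h2 => D.step2 hB h hP hu hw h1 h2 x
  have hadd := D.good_add_bad P u w
  have hbt := D.bad_le_tan h hP
  have hsk := D.sum_kap h hP
  obtain ⟨m, hm⟩ : ∃ m, p ^ 2 - 1 = m := ⟨_, rfl⟩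
  have hm' : p ^ 2 = m + 1 := by omega
  have hsq : (p ^ 2) ^ 2 - 1 = (p ^ 2 + 1) * (p ^ 2 - 1) := by
    rw [hm', sqm1]; simp
  rw [hsq] at hadd hsk
  by_cases hy : ∃ x : F × F, D.c (p + 1) P (x.1 • u + x.2 • w) ≠ 0
  · -- nonzero
    obtain ⟨x₀, hx₀⟩ := hy
    have htan : (D.tanS P u w).card ≤ (p + 1) * (p ^ 2 - 1) := by
      by_contra hlt
      push Not at hlt
      refine hx₀ (form_zero (D.c_form (p + 1) P u w) D (D.tanS P u w) ?_ hlt x₀)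
      intro x hx
      simp only [tanS, mem_filter, mem_univ, true_and] at hx
      exact ⟨hx.1, D.tangent_c hP hx.2 (D.c_one_V hu hw x) (by omega) (by omega)⟩
    have hf : (fun x : F × F => D.c k P (x.1 • u + x.2 • w)
        + (-1) * gam p (D.c (p + 1) P (x.1 • u + x.2 • w)) k) ∈ Form F k := by
      refine Submodule.add_mem _ (D.c_form k P u w) (Form.const_mul ?_ _)
      unfold gam
      split_ifs with hd
      · have := Form.pow (D.c_form (p + 1) P u w) (k / (p + 1))
        rwa [Nat.div_mul_cancel hd] at this
      · exact Submodule.zero_mem _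
    have := form_zero hf D (D.goodS P u w) ?_ ?_ x
    · linear_combination this
    · intro x hx
      simp only [goodS, mem_filter, mem_univ, true_and] at hx
      refine ⟨hx.1, ?_⟩
      rw [D.step3' hP (hc0 x) hx.2 (by omega)]; ring
    · have h1 : (p ^ 2 + 1) * (p ^ 2 - 1)
          ≤ (D.goodS P u w).card + (p + 1) * (p ^ 2 - 1) := by omega
      have h2 : (p ^ 2 + 1) * (p ^ 2 - 1)
          = (p ^ 2 - p) * (p ^ 2 - 1) + (p + 1) * (p ^ 2 - 1) := by
        rw [← add_mul]; congr 1; omega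
      have h3 : k * (p ^ 2 - 1) < (p ^ 2 - p) * (p ^ 2 - 1) :=
        Nat.mul_lt_mul_of_pos_right (by omega) (by omega)
      omega
  · push Not at hy
    rw [hy x]
    rcases Nat.eq_zero_or_pos k with rfl | hkpos
    · rw [D.c_zero, hP]; simp [gam]
    have hg0 : gam p (0 : F) k = 0 := by
      unfold gam
      split_ifs with hd
      · rw [zero_pow]
        have := Nat.div_pos (Nat.le_of_dvd hkpos hd) (by omega : 0 < p + 1)
        omega
      · rfl
    rw [hg0]
    clear hg0
    revert x
    induction k using Nat.strong_induction_on with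
    | _ k ih =>
    by_contra hne
    push Not at hne
    obtain ⟨x₀, hx₀⟩ := hne
    have hz : ∀ (x : F × F) j, 1 ≤ j → j < k → D.c j P (x.1 • u + x.2 • w) = 0 := by
      intro x j h1 h2
      exact ih j h2 (by omega) (by omega) x
    have htan : (D.tanS P u w).card ≤ k * (p ^ 2 - 1) := by
      by_contra hlt
      push Not at hlt
      refine hx₀ (form_zero (D.c_form k P u w) D (D.tanS P u w) ?_ hlt x₀)
      intro x hx
      simp only [tanS, mem_filter, mem_univ, true_and] at hx
      exact ⟨hx.1, D.tangent_c hP hx.2 (D.c_one_V hu hw x) (by omega) (by omega)⟩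
    have hgt : (D.goodS P u w).card ≤ (D.tanS P u w).card := by
      apply card_le_card
      intro x hx
      simp only [tanS, goodS, mem_filter, mem_univ, true_and] at hx ⊢
      refine ⟨hx.1, ?_⟩
      by_contra hk0
      exact (D.step3 hP (hc0 x) hx.2).1 (by omega) (hy x)
    have hbad : (p ^ 2 + 1 - k) * (p ^ 2 - 1) ≤ (D.badS P u w).card := by
      have : (p ^ 2 + 1) * (p ^ 2 - 1)
          = (p ^ 2 + 1 - k) * (p ^ 2 - 1) + k * (p ^ 2 - 1) := by
        rw [← add_mul]; congr 1; omega
      omega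
    have hmin : ∀ x ∈ D.badS P u w, (k - 1 + (p - 1)) / p ≤ D.kap P (x.1 • u + x.2 • w) := by
      intro x hx
      simp only [badS, mem_filter, mem_univ, true_and] at hx
      have h1 := D.big_A (k₀ := k) hP (by omega) (by omega) (hz x) hkpos
      rw [D.card_kap hP] at h1
      apply Nat.le_of_lt_succ
      rw [Nat.div_lt_iff_lt_mul D.hp.pos]
      rw [Nat.succ_mul, mul_comm]
      omega
    set mm := (k - 1 + (p - 1)) / p with hmm
    have hs2 : mm * (D.badS P u w).card ≤ (p ^ 2 + 1) * (p ^ 2 - 1) := by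
      refine le_trans ?_ hsk
      rw [mul_comm, ← smul_eq_mul, ← sum_const]
      refine (sum_le_sum hmin).trans (sum_le_sum_of_subset ?_)
      intro x hx
      simp only [badS, mem_filter, mem_univ, true_and] at hx ⊢
      exact hx.1
    refine arith1 (m := mm) h4 hk ?_ ?_ ?_
    · have : (p ^ 2 + 1) * (p ^ 2 - 1) ≤ (2 * k) * (p ^ 2 - 1) := by
        have : (2 * k) * (p ^ 2 - 1) = 2 * (k * (p ^ 2 - 1)) := by ring
        omega
      exact Nat.le_of_mul_le_mul_right this (by omega)
    · have := Nat.div_add_mod (k - 1 + (p - 1)) p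
      have := Nat.mod_lt (k - 1 + (p - 1)) D.hp.pos
      rw [← hmm] at *
      omega
    · have : (mm * (p ^ 2 + 1 - k)) * (p ^ 2 - 1) ≤ (p ^ 2 + 1) * (p ^ 2 - 1) := by
        rw [mul_assoc]
        exact (Nat.mul_le_mul_left _ hbad).trans hs2
      exact Nat.le_of_mul_le_mul_right this (by omega)

theorem gam_zero_of {p k r : ℕ} (y : F) (q : ℕ) (hk : k = (p + 1) * q + r) (h1 : 0 < r)
    (h2 : r < p + 1) : gam p y k = 0 := by
  unfold gam
  rw [if_neg]
  rintro ⟨j, hj⟩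
  have : k % (p + 1) = r := by
    rw [hk, Nat.mul_add_mod, Nat.mod_eq_of_lt h2]
  rw [hj, Nat.mul_mod_right] at this
  omega

/-- Step 5. -/
theorem step5 (hB : ∀ P, D.G P = 1 → D.Cond P) {u w P : E} (h : Ind3 (F := F) u w P)
    (hP : D.G P = 1)
    (hu : D.c 1 P u = 0) (hw : D.c 1 P w = 0) {k : ℕ} (hk : k < p ^ 2 - 1)
    (x : F × F) : D.c k P (x.1 • u + x.2 • w) = gam p (D.c (p + 1) P (x.1 • u + x.2 • w)) k := by
  have hQ := D.Q_gt
  have h4 := D.hp4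
  have hpp : 5 * p ≤ p ^ 2 := by nlinarith
  rcases Nat.lt_or_ge k (p ^ 2 - p) with hlt | hge
  · exact D.step4 hB h hP hu hw (by omega) x
  · obtain ⟨i, rfl⟩ : ∃ i, k = p ^ 2 - p + i := ⟨k - (p ^ 2 - p), by omega⟩
    obtain ⟨q, rfl⟩ : ∃ q, p = q + 2 + i := ⟨p - 2 - i, by omega⟩
    have e0 : (q + 2 + i) ^ 2 - (q + 2 + i) = (q + 2 + i) * (q + 1 + i) := by
      rw [show (q + 2 + i) ^ 2 = (q + 2 + i) * (q + 1 + i) + (q + 2 + i) by ring]; simp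
    have e1 : (q + 2 + i) ^ 2 = (q + 2 + i) * (q + 1 + i) + (q + 2 + i) := by ring
    have hm : (q + 2 + i) * i + (q + 1 + i) ≤ (q + 2 + i) ^ 2 - (q + 2 + i) - 1 := by
      rw [e0]
      have : (q + 2 + i) * i + (q + 1 + i) + 1 ≤ (q + 2 + i) * (q + 1 + i) := by nlinarith
      omega
    have hpow := D.c_pow hP (x.1 • u + x.2 • w)
      (k := (q + 2 + i) ^ 2 - (q + 2 + i) + i)
      (m := (q + 2 + i) * i + (q + 1 + i)) (by omega) (by omega) (by
        intro z
        rw [e0, show ((q + 2 + i) * (q + 1 + i) + i) * (q + 2 + i)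
          = (q + 2 + i) ^ 2 * (q + 1 + i) + (q + 2 + i) * i by ring, pow_add,
          pow_mul z ((q + 2 + i) ^ 2), D.pow_Q, ← pow_add]
        congr 1; ring)
    rw [D.step4 hB h hP hu hw hm x, gam_zero_of (r := q + 1) _ i (by ring) (by omega) (by omega)]
      at hpow
    rw [eq_zero_of_pow_eq_zero hpow, e0, gam_zero_of (r := i + 2) _ (q + i) (by ring) (by omega) (by omega)]

/-- Key result in case B. -/
theorem keyB (hB : ∀ P, D.G P = 1 → D.Cond P) {u w P : E} (h : Ind3 (F := F) u w P)
    (hP : D.G P = 1)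
    (hu : D.c 1 P u = 0) (hw : D.c 1 P w = 0) (x : F × F) (T : F) :
    D.G (x.1 • u + x.2 • w + T • P) = 0 ↔ T ^ (p + 1) = D.c (p + 1) P (x.1 • u + x.2 • w) := by
  have hQ := D.Q_gt
  have h4 := D.hp4
  have := D.charP
  set v := x.1 • u + x.2 • w with hv
  set y := D.c (p + 1) P v with hy
  have hyp : y ^ p = y := D.y_fix hP v
  obtain ⟨C, hC⟩ : ∃ C : F, ∀ T : F, D.G (v + T • P)
      = (if T ^ (p + 1) = y then 0 else 1) + C := by
    refine ⟨D.c (p ^ 2 - 1) P v - gam p y (p ^ 2 - 1), fun T => ?_⟩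
    rw [← B_ite hyp D, ← gam_sum D.hp, D.G_line]
    obtain ⟨m, hm⟩ : ∃ m, p ^ 2 = m + 1 := ⟨p ^ 2 - 1, by omega⟩
    rw [hm, sum_range_succ, sum_range_succ]
    have e : ∀ k ∈ range m, D.c k P v * T ^ (m + 1 - 1 - k) = gam p y k * T ^ (m + 1 - 1 - k) := by
      intro k hk
      have := mem_range.1 hk
      rw [hv, D.step5 hB h hP hu hw (by omega) x]
    rw [sum_congr rfl e]
    simp only [Nat.add_sub_cancel, Nat.sub_self, pow_zero, mul_one]
    ring
  have two : (2 : F) ≠ 0 := by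
    have := natCast_ne (F := F) (p := p) (l := 2) (by omega) (by omega)
    simpa using this
  have hne : ∃ T : F, T ^ (p + 1) ≠ y := by
    by_cases hy0 : y = 0
    · exact ⟨1, by rw [hy0, one_pow]; exact one_ne_zero⟩
    · exact ⟨0, by rw [zero_pow (by omega)]; exact Ne.symm hy0⟩
  have hC0 : C = 0 := by
    by_contra hC0
    obtain ⟨T₀, hT₀⟩ := hne
    have h1 := hC T₀
    rw [if_neg hT₀] at h1
    rcases D.g01 (v + T₀ • P) with h2 | h2
    · have hC1 : C = -1 := by rw [h2] at h1; linear_combination -h1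
      have hall : D.A P v = univ := by
        ext T
        simp only [mem_univ, iff_true]
        rw [D.mem_A]
        have h3 := hC T
        split_ifs at h3 with hT
        · rcases D.g01 (v + T • P) with h5 | h5
          · exact h5
          · exfalso
            rw [h5, hC1] at h3
            exact two (by linear_combination h3)
        · rw [h3, hC1]; ring
      have h5 := D.card_A P v
      rw [hall, card_univ, D.hF, hP] at h5
      push_cast at h5
      rw [CharP.cast_eq_zero F p] at h5
      simp at h5
    · rw [h2] at h1
      exact hC0 (by linear_combination -h1)
  rw [hC T, hC0, add_zero]
  split_ifs with h1 <;> simp [h1]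

end PD
end P6
end QH

namespace QH
section P7
open scoped Classical
open Finset
namespace PD
variable {F E : Type} [Field F] [Fintype F] [AddCommGroup E] [Module F E] [Fintype E]
    {p : ℕ} (D : PD F E p)

theorem herm_coeffs {P : E} (hP : D.G P = 1) (u w : E) : ∃ α β δ : F, α ^ p = α ∧ δ ^ p = δ ∧
    ∀ s t : F, D.c (p + 1) P (s • u + t • w)
      = α * s ^ (p + 1) + β * (s * t ^ p) + β ^ p * (t * s ^ p) + δ * t ^ (p + 1) := by
  have := D.charP
  have := Fact.mk D.hp
  have h4 := D.hp4
  have two : (2 : F) ≠ 0 := by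
    have := natCast_ne (F := F) (p := p) (l := 2) (by omega) (by omega)
    simpa using this
  have htwo : (2 : F) ^ p = 2 := by
    have : (2 : F) = ((2 : ℕ) : F) := by simp
    rw [this, ← frobenius_def, map_natCast]
  obtain ⟨a, b, c, d, H⟩ : ∃ a b c d : F, ∀ s t : F, D.c (p + 1) P (s • u + t • w)
      = a * s ^ (p + 1) + b * (s * t ^ p) + c * (t * s ^ p) + d * t ^ (p + 1) := by
    refine ⟨∑ i ∈ D.I, D.a i * (D.l i P) ^ (p ^ 2 - 1 - (p + 1)) * (-(D.l i u)) ^ (p + 1),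
      ∑ i ∈ D.I, D.a i * (D.l i P) ^ (p ^ 2 - 1 - (p + 1)) * (-(D.l i u) * (-(D.l i w)) ^ p),
      ∑ i ∈ D.I, D.a i * (D.l i P) ^ (p ^ 2 - 1 - (p + 1)) * (-(D.l i w) * (-(D.l i u)) ^ p),
      ∑ i ∈ D.I, D.a i * (D.l i P) ^ (p ^ 2 - 1 - (p + 1)) * (-(D.l i w)) ^ (p + 1), ?_⟩
    intro s t
    simp only [c, sum_mul, ← sum_add_distrib]
    refine sum_congr rfl fun i _ => ?_
    have e : -(D.l i (s • u + t • w)) = s * -(D.l i u) + t * -(D.l i w) := by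
      simp only [map_add, map_smul, smul_eq_mul]; ring
    rw [e, pow_succ (s * -(D.l i u) + t * -(D.l i w)), add_pow_char, mul_pow, mul_pow, pow_succ s,
      pow_succ t, pow_succ (-(D.l i u)), pow_succ (-(D.l i w))]
    ring
  have H' : ∀ s t : F, D.c (p + 1) P (s • u + t • w)
      = a ^ p * s ^ (p + 1) + b ^ p * (t * s ^ p) + c ^ p * (s * t ^ p) + d ^ p * t ^ (p + 1) := by
    intro s t
    rw [← D.y_fix hP, H]
    have hq : ∀ z : F, (z ^ p) ^ p = z := fun z => by
      rw [← pow_mul, ← sq, D.pow_Q]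
    simp only [add_pow_char, mul_pow, pow_succ, hq]
    ring
  have hq : ∀ z : F, (z ^ p) ^ p = z := fun z => by
    rw [← pow_mul, ← sq, D.pow_Q]
  refine ⟨(a + a ^ p) / 2, (b + c ^ p) / 2, (d + d ^ p) / 2, ?_, ?_, ?_⟩
  · rw [div_pow, htwo, add_pow_char, hq, add_comm]
  · rw [div_pow, htwo, add_pow_char, hq, add_comm]
  · intro s t
    rw [div_pow, htwo, add_pow_char, hq]
    have h1 := H s t
    have h2 := H' s t
    field_simp
    linear_combination h1 + h2

theorem odd_p (D : PD F E p) : Odd p := D.hp.odd_of_ne_two (by have := D.hp4; omega)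

theorem rank1 {u w P : E} (h : Ind3 (F := F) u w P) (hP : D.G P = 1) {α β δ : F}
    (hα : α ≠ 0) (hαp : α ^ p = α) (hdet : α * δ = β ^ (p + 1))
    (H : ∀ s t T : F, D.G (s • u + t • w + T • P) = 0 ↔ T ^ (p + 1)
      = α * s ^ (p + 1) + β * (s * t ^ p) + β ^ p * (t * s ^ p) + δ * t ^ (p + 1)) :
    D.Concl := by
  have := D.charP
  have := Fact.mk D.hp
  have h4 := D.hp4
  have hq : ∀ z : F, (z ^ p) ^ p = z := fun z => by
    rw [← pow_mul, ← sq, D.pow_Q]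
  refine D.cone (v := u) (P := P) (R := (-(β ^ p)) • u + α • w) ?_ hP ?_ ?_
  · intro s T γ hs
    have := h (s - γ * β ^ p) (γ * α) T (by rw [← hs]; module)
    have hγ : γ = 0 := (mul_eq_zero.1 this.2.1).resolve_right hα
    rw [hγ] at this
    refine ⟨by simpa using this.1, this.2.2, hγ⟩
  · have hA : ∀ T, T ∈ D.A P u ↔ T ^ (p + 1) = α := by
      intro T
      rw [D.mem_A]
      have := H 1 0 T
      rw [one_smul, zero_smul, add_zero] at this
      rw [this, zero_pow D.hp.ne_zero, zero_pow (by omega)]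
      simp
    have hc := D.card_kap hP u
    have hle : (D.A P u).card ≤ p + 1 := by
      have hsub : D.A P u ⊆ (Polynomial.nthRoots (p + 1) α).toFinset := by
        intro T hT
        rw [Multiset.mem_toFinset, Polynomial.mem_nthRoots (by omega)]
        exact (hA T).1 hT
      exact (card_le_card hsub).trans ((Multiset.toFinset_card_le _).trans
        (Polynomial.card_nthRoots _ _))
    have hlt : 1 < (D.A P u).card := by
      have hne : (D.A P u).Nonempty := by rw [← card_pos]; omega
      obtain ⟨η, hη⟩ := hne
      rw [one_lt_card]
      refine ⟨η, hη, -η, ?_, ?_⟩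
      · rw [hA] at hη ⊢
        rw [(D.odd_p.add_one).neg_pow]; exact hη
      · intro he
        have h2 : (2 : F) * η = 0 := by linear_combination he
        have two : (2 : F) ≠ 0 := by
          have := natCast_ne (F := F) (p := p) (l := 2) (by omega) (by omega)
          simpa using this
        have h3 := (mul_eq_zero.1 h2).resolve_left two
        rw [hA, h3, zero_pow (by omega)] at hη
        exact hα hη.symm
    have hk : D.kap P u ≠ 0 := by
      intro h0; rw [h0] at hc; omega
    have : p * 1 ≤ p * D.kap P u := Nat.mul_le_mul_left _ (by omega)
    omega
  · intro a b γ
    have e1 : a • u + b • P + γ • ((-(β ^ p)) • u + α • w)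
        = (a - γ * β ^ p) • u + (γ * α) • w + b • P := by module
    have e2 : a • u + b • P = a • u + (0 : F) • w + b • P := by module
    rw [e1, e2, H, H]
    have e3 : α * (a - γ * β ^ p) ^ (p + 1) + β * ((a - γ * β ^ p) * (γ * α) ^ p)
        + β ^ p * ((γ * α) * (a - γ * β ^ p) ^ p) + δ * (γ * α) ^ (p + 1) = α * a ^ (p + 1) := by
      rw [pow_succ (a - γ * β ^ p), sub_pow_char, mul_pow, mul_pow, mul_pow, hq, hαp, pow_succ α,
        hαp, pow_succ a, pow_succ γ]
      rw [pow_succ] at hdet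
      linear_combination (α * γ * γ ^ p) * hdet
    rw [e3, zero_pow D.hp.ne_zero, zero_pow (by omega)]
    simp

theorem caseB (hB : ∀ P, D.G P = 1 → D.Cond P) : D.Concl := by
  have := D.charP
  have := Fact.mk D.hp
  have h4 := D.hp4
  have hq : ∀ z : F, (z ^ p) ^ p = z := fun z => by
    rw [← pow_mul, ← sq, D.pow_Q]
  obtain ⟨P, hP⟩ := D.exists_one
  obtain ⟨u, w, h, hu, hw⟩ := D.exists_ker hP
  obtain ⟨α, β, δ, hα, hδ, hy⟩ := D.herm_coeffs hP u w
  have H : ∀ s t T : F, D.G (s • u + t • w + T • P) = 0 ↔ T ^ (p + 1)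
      = α * s ^ (p + 1) + β * (s * t ^ p) + β ^ p * (t * s ^ p) + δ * t ^ (p + 1) := by
    intro s t T
    rw [← hy]
    exact D.keyB hB h hP hu hw (s, t) T
  by_cases hdet : α * δ = β ^ (p + 1)
  · by_cases hα0 : α = 0
    · have hβ0 : β = 0 := by
        rw [hα0, zero_mul] at hdet
        exact eq_zero_of_pow_eq_zero hdet.symm
      by_cases hδ0 : δ = 0
      · right; left
        refine ⟨Submodule.span F {u, w}, ?_, ?_⟩
        · apply finrank_pair
          intro s t hst
          have := h s t 0 (by rw [zero_smul, add_zero, hst])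
          exact ⟨this.1, this.2.1⟩
        · intro y
          obtain ⟨⟨⟨s, t⟩, T⟩, rfl⟩ := (D.bij h).2 y
          simp only
          rw [H, hα0, hβ0, hδ0, zero_pow D.hp.ne_zero, Submodule.mem_span_pair]
          simp only [zero_mul, add_zero]
          rw [pow_eq_zero_iff (by omega)]
          constructor
          · rintro rfl
            exact ⟨s, t, by simp⟩
          · rintro ⟨s', t', he⟩
            have := h (s - s') (t - t') T (by
              rw [← sub_eq_zero.2 he.symm]; module)
            exact this.2.2
      · have h' : Ind3 (F := F) w u P := by
          intro s t T hT
          have := h t s T (by rw [← hT]; module)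
          exact ⟨this.2.1, this.1, this.2.2⟩
        refine D.rank1 h' hP (α := δ) (β := 0) (δ := 0) hδ0 hδ (by simp) ?_
        intro s t T
        have := H t s T
        rw [add_comm (s • w), this, hα0, hβ0, zero_pow D.hp.ne_zero]
        simp
    · exact D.rank1 h hP hα0 hα hdet H
  · left
    let f : (Fin 3 → F) →ₗ[F] E :=
      { toFun := fun y => y 0 • u + y 1 • w + y 2 • P
        map_add' := fun x y => by simp only [Pi.add_apply]; module
        map_smul' := fun a x => by simp only [Pi.smul_apply, smul_eq_mul, RingHom.id_apply]; module }
    have hf : Function.Bijective f := by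
      constructor
      · rw [← LinearMap.ker_eq_bot, LinearMap.ker_eq_bot']
        intro y hy
        have := h (y 0) (y 1) (y 2) hy
        ext i; fin_cases i
        · exact this.1
        · exact this.2.1
        · exact this.2.2
      · intro y
        obtain ⟨⟨⟨s, t⟩, T⟩, rfl⟩ := (D.bij h).2 y
        exact ⟨![s, t, T], by simp [f]⟩
    refine ⟨LinearEquiv.ofBijective f hf, !![-α, -β, 0; -(β ^ p), -δ, 0; 0, 0, 1], ?_, ?_, ?_⟩
    · rw [isUnit_iff_ne_zero, Matrix.det_fin_three]
      simp
      intro h0; apply hdet; rw [pow_succ]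
      linear_combination h0
    · have hneg : ∀ z : F, (-z) ^ p = -(z ^ p) := fun z => D.odd_p.neg_pow z
      have h0 : (0 : F) ^ p = 0 := zero_pow D.hp.ne_zero
      ext i j
      fin_cases i <;> fin_cases j <;> simp [hneg, hα, hδ, hq, D.hp.ne_zero]
    · intro y
      have := H (y 0) (y 1) (y 2)
      have e : (LinearEquiv.ofBijective f hf) y = y 0 • u + y 1 • w + y 2 • P := rfl
      rw [e, this, Fin.sum_univ_three, Fin.sum_univ_three, Fin.sum_univ_three, Fin.sum_univ_three]
      simp
      rw [← sub_eq_zero]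
      have e : ∀ a b : F, a = b → (a = 0 ↔ b = 0) := fun a b h => by rw [h]
      apply e
      simp only [pow_succ]
      ring

end PD
end P7
end QH

namespace QH
section P8
open scoped Classical
open Finset

theorem sum_proj {F : Type} [Field F] [Fintype F] {Q : ℕ} (hF : Fintype.card F = Q)
    (φ : F × F → ℕ) (hφ : ∀ (c : F) (x : F × F), c ≠ 0 → φ (c * x.1, c * x.2) = φ x) :
    ∑ x, φ x = φ 0 + (Q - 1) * (φ (1, 0) + ∑ s, φ (s, 1)) := by
  have hc : (univ.erase (0 : F)).card = Q - 1 := by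
    rw [card_erase_of_mem (mem_univ _), card_univ, hF]
  have h1 : ∑ s : F, φ (s, 0) = φ 0 + (Q - 1) * φ (1, 0) := by
    rw [← add_sum_erase _ _ (mem_univ (0 : F)), sum_congr rfl (g := fun _ => φ (1, 0)), sum_const,
      hc, smul_eq_mul]
    · rfl
    · intro s hs
      have := hφ s (1, 0) (ne_of_mem_erase hs)
      simpa using this
  have h2 : ∀ t : F, t ≠ 0 → ∑ s : F, φ (s, t) = ∑ s, φ (s, 1) := by
    intro t ht
    rw [← Equiv.sum_comp (Equiv.mulLeft₀ t ht)]
    refine sum_congr rfl fun s _ => ?_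
    have := hφ t (s, 1) ht
    simpa using this
  rw [Fintype.sum_prod_type_right, ← add_sum_erase _ _ (mem_univ (0 : F)), h1,
    sum_congr rfl (g := fun _ => ∑ s, φ (s, 1)), sum_const, hc, smul_eq_mul]
  · ring
  · intro t ht; exact h2 t (ne_of_mem_erase ht)

/-- The Newton recursion. -/
noncomputable def nr {F : Type} [Field F] (c : ℕ → F) : ℕ → F
  | 0 => 1
  | (l + 1) => -((l + 1 : ℕ) : F)⁻¹ * ∑ i : Fin (l + 1), nr c i * c (l + 1 - i)

theorem nr_zero {F : Type} [Field F] (c : ℕ → F) : nr c 0 = 1 := by rw [nr]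

theorem nr_succ {F : Type} [Field F] (c : ℕ → F) (l : ℕ) :
    nr c (l + 1) = -((l + 1 : ℕ) : F)⁻¹ * ∑ i ∈ range (l + 1), nr c i * c (l + 1 - i) := by
  rw [nr, ← Fin.sum_univ_eq_sum_range (fun i => nr c i * c (l + 1 - i))]

theorem nr_p {F : Type} [Field F] {p : ℕ} [CharP F p] (hp : p.Prime) (c : ℕ → F) : nr c p = 0 := by
  obtain ⟨l, rfl⟩ : ∃ l, p = l + 1 := ⟨p - 1, by have := hp.pos; omega⟩
  rw [nr_succ, CharP.cast_eq_zero F (l + 1)]; simp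

theorem nr_form {F : Type} [Field F] (c : ℕ → F × F → F) (hc : ∀ k, c k ∈ Form F k) (l : ℕ) :
    (fun x => nr (fun k => c k x) l) ∈ Form F l := by
  induction l using Nat.strong_induction_on with
  | _ l ih =>
    rcases l with _ | l
    · simp only [nr_zero]; exact Form.one
    · simp only [nr_succ]
      apply Form.const_mul
      apply Form.sum
      intro i hi
      have hi' := mem_range.1 hi
      have := Form.mul (ih i hi') (hc (l + 1 - i))
      rwa [Nat.add_sub_cancel' hi'.le] at this

noncomputable def dd {F : Type} [Field F] (p : ℕ) (c : ℕ → F) (T : F) : F :=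
  c 2 * ∑ i ∈ range (p + 2), nr c i * T ^ (p + 1 - i)
    + (-∑ i ∈ range (p + 1), nr c i * c (p + 2 - i)) * T

theorem dd_form {F : Type} [Field F] (p : ℕ) (c : ℕ → F × F → F) (hc : ∀ k, c k ∈ Form F k)
    {μ : F × F → F} (hμ : μ ∈ Form F 1) :
    (fun x => dd p (fun k => c k x) (μ x)) ∈ Form F (p + 3) := by
  unfold dd
  refine Submodule.add_mem (Form F (p + 3))
    (x := fun x => c 2 x * ∑ i ∈ range (p + 2), nr (fun k => c k x) i * μ x ^ (p + 1 - i))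
    (y := fun x => (-∑ i ∈ range (p + 1), nr (fun k => c k x) i * c (p + 2 - i) x) * μ x) ?_ ?_
  · have h : (fun x => ∑ i ∈ range (p + 2), nr (fun k => c k x) i * μ x ^ (p + 1 - i))
        ∈ Form F (p + 1) := by
      apply Form.sum
      intro i hi
      have hi' := mem_range.1 hi
      have := Form.mul (nr_form c hc i) (Form.pow hμ (p + 1 - i))
      rwa [mul_one, Nat.add_sub_cancel' (by omega)] at this
    have := Form.mul (hc 2) h
    rwa [show 2 + (p + 1) = p + 3 by ring] at this
  · have h : (fun x => ∑ i ∈ range (p + 1), nr (fun k => c k x) i * c (p + 2 - i) x)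
        ∈ Form F (p + 2) := by
      apply Form.sum
      intro i hi
      have hi' := mem_range.1 hi
      have := Form.mul (nr_form c hc i) (hc (p + 2 - i))
      rwa [Nat.add_sub_cancel' (by omega)] at this
    have h' := Submodule.neg_mem _ h
    have h'' := Form.mul h' hμ
    exact h''

theorem dd_eq {F : Type} [Field F] {p : ℕ} [CharP F p] (hp : p.Prime) (c : ℕ → F) (A : Finset F)
    (hA : A.card = p + 1) (hc : ∀ k, 1 ≤ k → k ≤ p + 2 → c k = ∑ a ∈ A, a ^ k) (h1 : c 1 = 0)
    (T : F) : dd p c T = c 2 * (rp A).eval T := by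
  have hp2 := hp.two_le
  have hlt : ∀ l, l < p → nr c l = rc A l := by
    intro l
    induction l using Nat.strong_induction_on with
    | _ l ih =>
      intro hl
      rcases l with _ | l
      · rw [nr_zero, rc_zero]
      · have hn := newton A (l := l + 1) (by omega)
        have hne := natCast_ne (F := F) (p := p) (l := l + 1) (by omega) hl
        rw [nr_succ, neg_mul, ← mul_neg, inv_mul_eq_iff_eq_mul₀ hne, hn]
        congr 1
        refine sum_congr rfl fun i hi => ?_
        have hi' := mem_range.1 hi
        rw [ih i hi' (by omega), hc _ (by omega) (by omega)]
  have hp1 : nr c (p + 1) = rc A (p + 1) := by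
    have hn := newton A (l := p + 1) (by omega)
    have e : ((p + 1 : ℕ) : F) = 1 := by push_cast; rw [CharP.cast_eq_zero F p]; ring
    rw [e, one_mul, sum_range_succ] at hn
    rw [nr_succ, e, sum_range_succ, hn, nr_p hp]
    have h1' := hc 1 le_rfl (by omega)
    rw [h1] at h1'
    rw [Nat.add_sub_cancel_left, ← h1', h1, mul_zero, mul_zero, add_zero, add_zero, inv_one,
      neg_one_mul]
    congr 1
    refine sum_congr rfl fun i hi => ?_
    have hi' := mem_range.1 hi
    rw [hlt i hi', hc _ (by omega) (by omega)]
  have hz : ∑ i ∈ range (p + 2), rc A i * ∑ a ∈ A, a ^ (p + 2 - i) = 0 := by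
    simp only [mul_sum]
    rw [sum_comm]
    apply sum_eq_zero
    intro a ha
    have h0 := (rp_eval_eq_zero A a).2 ha
    rw [rp_eval_sum, hA] at h0
    have : ∑ i ∈ range (p + 2), rc A i * a ^ (p + 2 - i)
        = (∑ i ∈ range (p + 2), rc A i * a ^ (p + 1 - i)) * a := by
      rw [sum_mul]
      refine sum_congr rfl fun i hi => ?_
      have hi' := mem_range.1 hi
      rw [show p + 2 - i = (p + 1 - i) + 1 by omega, pow_succ]; ring
    rw [this, h0, zero_mul]
  have hrho : -∑ i ∈ range (p + 1), nr c i * c (p + 2 - i) = c 2 * rc A p := by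
    have h1' := hc 1 le_rfl (by omega)
    rw [h1] at h1'
    rw [sum_range_succ, sum_range_succ, show p + 2 - (p + 1) = 1 by omega, ← h1',
      Nat.add_sub_cancel_left, ← hc 2 (by omega) (by omega)] at hz
    rw [sum_range_succ, nr_p hp]
    have : ∑ i ∈ range p, nr c i * c (p + 2 - i)
      = ∑ i ∈ range p, rc A i * ∑ a ∈ A, a ^ (p + 2 - i) := by
      refine sum_congr rfl fun i hi => ?_
      have hi' := mem_range.1 hi
      rw [hlt i hi', hc _ (by omega) (by omega)]
    rw [this]
    linear_combination -hz
  rw [dd, hrho, rp_eval_sum, hA, sum_range_succ, sum_range_succ, sum_range_succ _ (p + 1),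
    sum_range_succ _ p, nr_p hp, hp1,
    sum_congr rfl (fun i hi => by rw [hlt i (mem_range.1 hi)])]
  simp only [Nat.add_sub_cancel_left, Nat.sub_self]
  ring

end P8
end QH

namespace QH
section P9
open scoped Classical
open Finset
namespace PD
variable {F E : Type} [Field F] [Fintype F] [AddCommGroup E] [Module F E] [Fintype E]
    {p : ℕ} (D : PD F E p)

theorem c2_ne {u w P : E} (h : Ind3 (F := F) u w P) (hP : D.G P = 1) (hA : ¬ D.Cond P)
    (hu : D.c 1 P u = 0) (hw : D.c 1 P w = 0) :
    ∃ x : F × F, D.c 2 P (x.1 • u + x.2 • w) ≠ 0 := by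
  obtain ⟨v, hv⟩ := not_forall.1 hA
  obtain ⟨⟨⟨s, t⟩, T⟩, hx⟩ := (D.bij h).2 (v + D.c 1 P v • P)
  simp only at hx
  have h1 := D.ker_shift hP v
  have h2 := D.c2_shift hP v
  rw [← hx] at h1 h2
  have hT : T = 0 := by
    rw [D.c_one_add, D.c_one_V hu hw (s, t), D.c_one_smul, D.c_one_self, hP] at h1
    simpa using h1
  refine ⟨(s, t), ?_⟩
  rw [hT, zero_smul, add_zero] at h2
  rw [h2]; exact sub_ne_zero.2 hv

theorem c2_zeros {u w P : E} (h : Ind3 (F := F) u w P) (hP : D.G P = 1) (hA : ¬ D.Cond P)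
    (hu : D.c 1 P u = 0) (hw : D.c 1 P w = 0) :
    (univ.filter fun x : F × F => x ≠ 0 ∧ D.c 2 P (x.1 • u + x.2 • w) = 0).card
      ≤ 2 * (p ^ 2 - 1) := by
  obtain ⟨x, hx⟩ := D.c2_ne h hP hA hu hw
  by_contra hlt
  push Not at hlt
  exact hx (form_zero (D.c_form 2 P u w) D _ (fun x hx => by simpa using hx) hlt x)

theorem tan_le {u w P : E} (h : Ind3 (F := F) u w P) (hP : D.G P = 1) (hA : ¬ D.Cond P)
    (hu : D.c 1 P u = 0) (hw : D.c 1 P w = 0) : (D.tanS P u w).card ≤ 2 * (p ^ 2 - 1) := by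
  refine le_trans (card_le_card ?_) (D.c2_zeros h hP hA hu hw)
  intro x hx
  simp only [tanS, mem_filter, mem_univ, true_and] at hx ⊢
  exact ⟨hx.1, D.tangent_c hP hx.2 (D.c_one_V hu hw x) (by omega) (by have := D.Q_gt; omega)⟩

/-- Lines with many points are full. -/
theorem full {X w P : E} (h : Ind3 (F := F) X w P) (hP : D.G P = 1) (hA : ¬ D.Cond P)
    (hX : D.G X = 0) (hc : 2 * p ≤ (D.A X w).card) : D.A X w = univ := by
  have hp4 := D.hp4
  have hQ := D.Q_gt
  have := D.charP
  set u' := X + D.c 1 P X • P with hu'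
  set w' := w + D.c 1 P w • P with hw'
  have h' : Ind3 (F := F) u' w' P := ind3_shift h _ _
  have hu := D.ker_shift hP X
  have hw := D.ker_shift hP w
  rw [← hu'] at hu
  rw [← hw'] at hw
  set μ : F × F → F := fun x => x.1 * (-(D.c 1 P X)) + x.2 * (-(D.c 1 P w)) with hμ
  have hV : ∀ x : F × F, x.1 • X + x.2 • w = (x.1 • u' + x.2 • w') + μ x • P := by
    intro x; rw [hu', hw', hμ]; module
  have htan := D.tan_le h' hP hA hu hw
  have hbad := D.bad_le_tan h' hP
  have hc2 := D.c2_zeros h' hP hA hu hw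
  have hcount := D.line_count X w
  rw [if_pos hX] at hcount
  set S := univ.filter fun x : F × F => x ≠ 0 ∧ D.G (x.1 • X + x.2 • w) = 0 with hS
  set f : F × F → F := fun x => dd p (fun k => D.c k P (x.1 • u' + x.2 • w')) (μ x) with hf
  have hfF : f ∈ Form F (p + 3) := dd_form p (fun k x => D.c k P (x.1 • u' + x.2 • w'))
    (fun k => D.c_form k P u' w') (Form.lin _ _)
  have hp2 : p + 2 < p ^ 2 := by nlinarith
  have hf1 : ∀ x, D.kap P (x.1 • u' + x.2 • w') = 1 →
      f x = D.c 2 P (x.1 • u' + x.2 • w') * (rp (D.A P (x.1 • u' + x.2 • w'))).eval (μ x) := by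
    intro x hx
    have hcard := D.card_kap hP (x.1 • u' + x.2 • w')
    rw [hx, mul_one, add_comm 1 p] at hcard
    exact dd_eq D.hp _ _ hcard (fun k _ hk => D.c_eq hP _ (by omega)) (D.c_one_V hu hw x) _
  have hf0 : ∀ x, D.kap P (x.1 • u' + x.2 • w') = 0 → f x = 0 := by
    intro x hx
    have hc := fun k h1 h2 => D.tangent_c hP hx (D.c_one_V hu hw x) (k := k) h1 h2
    rw [hf]; simp only [dd]
    rw [hc 2 (by omega) (by omega), sum_eq_zero (s := range (p + 1))]
    · ring
    · intro i hi
      have := mem_range.1 hi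
      rw [hc _ (by omega) (by omega), mul_zero]
  have hfz : ∀ x, f x = 0 := by
    apply form_zero hfF D (S \ D.badS P u' w')
    · intro x hx
      rw [mem_sdiff, hS, badS, mem_filter, mem_filter] at hx
      obtain ⟨⟨_, hx1, hx2⟩, hx3⟩ := hx
      refine ⟨hx1, ?_⟩
      have hk : D.kap P (x.1 • u' + x.2 • w') = 0 ∨ D.kap P (x.1 • u' + x.2 • w') = 1 := by
        by_contra hne
        exact hx3 ⟨mem_univ _, hx1, by omega⟩
      rcases hk with hk | hk
      · exact hf0 x hk
      · rw [hf1 x hk, (rp_eval_eq_zero _ _).2, mul_zero]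
        rw [D.mem_A, ← hV]; exact hx2
    · have h1 := le_card_sdiff (D.badS P u' w') S
      refine lt_of_lt_of_le ?_ h1
      rw [hcount]
      have : (p ^ 2 - 1) * (2 * p + 1) ≤ (p ^ 2 - 1) * ((D.A X w).card + 1) :=
        Nat.mul_le_mul_left _ (by omega)
      have h2 : (p + 3) * (p ^ 2 - 1) + 2 * (p ^ 2 - 1) < (p ^ 2 - 1) * (2 * p + 1) := by
        rw [← add_mul, mul_comm]
        apply Nat.mul_lt_mul_of_pos_left <;> omega
      omega
  have hN : (univ.filter fun x : F × F => x ≠ 0).card ≤ S.card + 4 * (p ^ 2 - 1) := by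
    have hsub : (univ.filter fun x : F × F => x ≠ 0) ⊆ S ∪ (D.badS P u' w' ∪
        univ.filter fun x : F × F => x ≠ 0 ∧ D.c 2 P (x.1 • u' + x.2 • w') = 0) := by
      intro x hx
      have hx0 : x ≠ 0 := by simpa using hx
      simp only [mem_union, hS, badS, mem_filter, mem_univ, true_and]
      by_contra hcon
      push Not at hcon
      obtain ⟨h1, h2, h3⟩ := hcon
      have hk := h2 hx0
      have hk : D.kap P (x.1 • u' + x.2 • w') = 0 ∨ D.kap P (x.1 • u' + x.2 • w') = 1 := by omega
      rcases hk with hk | hk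
      · exact h3 hx0 (D.tangent_c hP hk (D.c_one_V hu hw x) (by omega) (by omega))
      · have h4 := hfz x
        rw [hf1 x hk] at h4
        have h5 := (rp_eval_eq_zero _ _).1 ((mul_eq_zero.1 h4).resolve_left (h3 hx0))
        rw [D.mem_A, ← hV] at h5
        exact h1 hx0 h5
    have h1 := card_le_card hsub
    have h2 := card_union_le S (D.badS P u' w' ∪
        univ.filter fun x : F × F => x ≠ 0 ∧ D.c 2 P (x.1 • u' + x.2 • w') = 0)
    have h3 := card_union_le (D.badS P u' w')
        (univ.filter fun x : F × F => x ≠ 0 ∧ D.c 2 P (x.1 • u' + x.2 • w') = 0)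
    omega
  rw [D.card_ne2, hcount] at hN
  obtain ⟨k, hk⟩ := D.card_A_zero hX w
  obtain ⟨m, hm⟩ : ∃ m, p ^ 2 = m + 1 := ⟨p ^ 2 - 1, by omega⟩
  have hle := D.card_A_le X w
  have hge : m + 2 ≤ (D.A X w).card + 1 + 4 := by
    rw [hm, sqm1, Nat.add_sub_cancel] at hN
    have hmpos : 0 < m := by omega
    apply Nat.le_of_mul_le_mul_left _ hmpos
    linarith
  rw [← card_eq_iff_eq_univ, D.hF]
  rw [hk] at hge hle ⊢
  have hkp : k = p := by
    have h1 : k ≤ p := by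
      by_contra hlt; push Not at hlt; nlinarith
    by_contra hne
    have : k + 1 ≤ p := by omega
    nlinarith
  rw [hkp, sq]

end PD
end P9
end QH

namespace QH
section P10
open scoped Classical
open Finset
namespace PD
variable {F E : Type} [Field F] [Fintype F] [AddCommGroup E] [Module F E] [Fintype E]
    {p : ℕ} (D : PD F E p)

theorem card_swap {X P : E} (hP : D.G P = 1) (hX : D.G X = 0) :
    (D.A X P).card = p * D.kap P X := by
  have h1 := D.line_count X P
  have h2 := D.line_count P X
  have h3 : (univ.filter fun x : F × F => x ≠ 0 ∧ D.G (x.1 • X + x.2 • P) = 0).card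
      = (univ.filter fun x : F × F => x ≠ 0 ∧ D.G (x.1 • P + x.2 • X) = 0).card := by
    apply card_bij (fun x _ => (x.2, x.1))
    · intro x hx
      simp only [mem_filter, mem_univ, true_and] at hx ⊢
      refine ⟨fun h => hx.1 ?_, ?_⟩
      · rw [Prod.mk_eq_zero] at h
        exact Prod.ext h.2 h.1
      · rw [add_comm]; exact hx.2
    · intro x _ y _ h
      simp only [Prod.mk.injEq] at h
      exact Prod.ext h.2 h.1
    · intro y hy
      simp only [mem_filter, mem_univ, true_and] at hy
      refine ⟨(y.2, y.1), ?_, rfl⟩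
      simp only [mem_filter, mem_univ, true_and]
      refine ⟨fun h => hy.1 ?_, ?_⟩
      · rw [Prod.mk_eq_zero] at h
        exact Prod.ext h.2 h.1
      · rw [add_comm]; exact hy.2
  rw [h1, h2, if_pos hX, if_neg (by rw [hP]; exact one_ne_zero), add_zero] at h3
  have hQ := D.Q_gt
  have h4 := Nat.eq_of_mul_eq_mul_left (by omega) h3
  rw [D.card_kap hP X] at h4
  omega

theorem kap_shift (P v : E) (τ : F) : D.kap P (v + τ • P) = D.kap P v := by
  have : (D.A P (v + τ • P)).card = (D.A P v).card := by
    refine card_bij (fun x _ => x + τ) (fun x hx => (D.A_shift P v τ x).1 hx) ?_ ?_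
    · intro x _ y _ h; exact add_right_cancel h
    · intro y hy
      refine ⟨y - τ, ?_, by ring⟩
      rw [D.A_shift]; simpa using hy
  rw [kap, this, kap]

theorem total_X {P w X : E} (h : Ind3 (F := F) P w X) (hX : D.G X = 0) :
    (univ.filter fun y => D.G y = 0).card
      = p ^ 2 + (p ^ 2 - 1) * ((D.A X P).card + ∑ s : F, (D.A X (w + s • P)).card) := by
  rw [D.total h, sum_proj D.hF (fun x : F × F => (D.A X (x.1 • P + x.2 • w)).card)]
  · simp only [Prod.fst_zero, Prod.snd_zero, zero_smul, add_zero, one_smul, D.A_zero_zero hX,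
      card_univ, D.hF]
    simp only [add_comm w]
  · intro c x hc
    have : (c * x.1) • P + (c * x.2) • w = c • (x.1 • P + x.2 • w) := by module
    simp only
    rw [this, D.A_scale_card _ _ hc]

theorem total_P {u w P : E} (h : Ind3 (F := F) u w P) (hP : D.G P = 1) :
    (univ.filter fun y => D.G y = 0).card
      = 1 + (((p ^ 2) ^ 2 - 1) + p * ∑ x ∈ univ.filter (fun x : F × F => x ≠ 0),
        D.kap P (x.1 • u + x.2 • w)) := by
  rw [D.total h, ← add_sum_erase _ _ (mem_univ (0 : F × F))]
  simp only [Prod.fst_zero, Prod.snd_zero, zero_smul, add_zero, D.A_zero_one hP,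
    card_singleton]
  have e : ∀ x ∈ univ.filter (fun x : F × F => x ≠ 0), (D.A P (x.1 • u + x.2 • w)).card
    = 1 + p * D.kap P (x.1 • u + x.2 • w) := fun x _ => D.card_kap hP _
  rw [← filter_ne', sum_congr rfl e, sum_add_distrib, ← mul_sum, sum_const, D.card_ne2, smul_eq_mul,
    mul_one]

theorem sum_kap_ge (P u w : E) : (p ^ 2) ^ 2 - 1 ≤
    ∑ x ∈ univ.filter (fun x : F × F => x ≠ 0), D.kap P (x.1 • u + x.2 • w)
      + (D.tanS P u w).card := by
  have h2 : (D.tanS P u w).card = ∑ x ∈ univ.filter (fun x : F × F => x ≠ 0),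
      if D.kap P (x.1 • u + x.2 • w) = 0 then 1 else 0 := by
    rw [tanS, ← filter_filter, card_filter]
  rw [h2, ← D.card_ne2, card_eq_sum_ones, ← sum_add_distrib]
  refine sum_le_sum fun x _ => ?_
  split_ifs <;> omega

theorem kap_le {P X : E} (hP : D.G P = 1) (hA : ¬ D.Cond P) {w : E} (h : Ind3 (F := F) P w X) :
    D.kap P X ≤ 3 := by
  have hQ := D.Q_gt
  have h' := ind3_shift (ind3_rot (ind3_rot h)) (D.c 1 P X) (D.c 1 P P)
  have hh : Ind3 (F := F) X w P := by
    intro s t T hT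
    have := h T t s (by rw [← hT]; module)
    exact ⟨this.2.2, this.2.1, this.1⟩
  have h' := ind3_shift hh (D.c 1 P X) (D.c 1 P w)
  have h1 := D.excess h' hP
  have h2 := D.tan_le h' hP hA (D.ker_shift hP X) (D.ker_shift hP w)
  set u' := X + D.c 1 P X • P with hu'
  set w' := w + D.c 1 P w • P with hw'
  have h3 : ∑ x : F × F, (D.kap P (x.1 • u' + x.2 • w') - 1)
      = (D.kap P ((0 : F × F).1 • u' + (0 : F × F).2 • w') - 1)
        + ∑ x ∈ univ.filter (fun x : F × F => x ≠ 0), (D.kap P (x.1 • u' + x.2 • w') - 1) := by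
    rw [← add_sum_erase _ _ (mem_univ (0 : F × F)), filter_ne']
  rw [sum_proj D.hF (fun x : F × F => (D.kap P (x.1 • u' + x.2 • w') - 1))] at h3
  · have h4 := Nat.add_left_cancel h3
    simp only [one_smul, zero_smul, add_zero] at h4
    rw [hu', D.kap_shift P X] at h4
    rw [← h4, ] at h1
    have h5 := h1.trans h2
    rw [mul_comm 2] at h5
    have := Nat.le_of_mul_le_mul_left h5 (by omega)
    omega
  · intro c x hc
    have : (c * x.1) • u' + (c * x.2) • w' = c • (x.1 • u' + x.2 • w') := by module
    simp only
    rw [this, D.kap_smul _ _ hc]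

theorem full_or {X w P : E} (h : Ind3 (F := F) X w P) (hP : D.G P = 1) (hA : ¬ D.Cond P)
    (hX : D.G X = 0) : D.A X w = univ ∨ (D.A X w).card = p ∨ (D.A X w).card = 0 := by
  by_cases hc : 2 * p ≤ (D.A X w).card
  · exact Or.inl (D.full h hP hA hX hc)
  · right
    obtain ⟨k, hk⟩ := D.card_A_zero hX w
    have hp := D.hp.pos
    have : k < 2 := by
      by_contra h2; push Not at h2
      apply hc; rw [hk]; nlinarith
    interval_cases k
    · right; simpa using hk
    · left; simpa using hk

end PD
end P10
end QH

namespace QH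
section P11
open scoped Classical
open Finset
namespace PD
variable {F E : Type} [Field F] [Fintype F] [AddCommGroup E] [Module F E] [Fintype E]
    {p : ℕ} (D : PD F E p)

theorem ind3_a {P w X : E} (h : Ind3 (F := F) P w X) (s : F) : Ind3 (F := F) X (w + s • P) P := by
  intro a b c hT
  have := h (b * s + c) b a (by rw [← hT]; module)
  obtain ⟨h1, rfl, rfl⟩ := this
  simpa using h1

theorem span_full {X w : E} (hX : D.G X = 0) (h : D.A X w = univ) (a b : F) :
    D.G (a • X + b • w) = 0 := by
  by_cases hb : b = 0
  · subst hb
    rw [zero_smul, add_zero]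
    by_cases ha : a = 0
    · rw [ha, zero_smul]; exact D.G_zero
    · rw [D.G_smul ha, hX]
  · have h1 : a / b ∈ D.A X w := by rw [h]; exact mem_univ _
    rw [D.mem_A, ← D.G_smul hb, smul_add, smul_smul, mul_div_cancel₀ _ hb] at h1
    rw [add_comm]; exact h1

theorem exists_full {P X w : E} (hP : D.G P = 1) (hA : ¬ D.Cond P) (h : Ind3 (F := F) P w X)
    (hX : D.G X = 0) : ∃ s : F, D.A X (w + s • P) = univ := by
  by_contra hno
  push Not at hno
  have hQ := D.Q_gt
  have hp4 := D.hp4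
  have hle : ∀ s : F, (D.A X (w + s • P)).card ≤ p := by
    intro s
    rcases D.full_or (ind3_a h s) hP hA hX with h1 | h1 | h1
    · exact absurd h1 (hno s)
    · omega
    · omega
  have hsum : ∑ s : F, (D.A X (w + s • P)).card ≤ p ^ 2 * p := by
    calc _ ≤ ∑ s : F, p := sum_le_sum fun s _ => hle s
      _ = _ := by rw [sum_const, card_univ, D.hF, smul_eq_mul]
  have h1 := D.total_X h hX
  have hk := D.kap_le hP hA h
  rw [D.card_swap hP hX] at h1
  obtain ⟨u', w', h', hu, hw⟩ := D.exists_ker hP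
  have h2 := D.total_P h' hP
  have h3 := D.sum_kap_ge P u' w'
  have h4 := D.tan_le h' hP hA hu hw
  set K := ∑ x ∈ univ.filter (fun x : F × F => x ≠ 0), D.kap P (x.1 • u' + x.2 • w')
  set Sg := ∑ s : F, (D.A X (w + s • P)).card
  obtain ⟨m, hm⟩ : ∃ m, p ^ 2 = m + 1 := ⟨p ^ 2 - 1, by omega⟩
  have hm2 : 5 * p ≤ p ^ 2 := by nlinarith
  rw [h2] at h1
  rw [hm, sqm1, Nat.add_sub_cancel] at h1
  rw [hm, sqm1] at h3
  rw [hm, Nat.add_sub_cancel] at h4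
  rw [hm] at hsum hm2
  have h5 : m * (m + 2) ≤ K + 2 * m := by nlinarith
  have h6 : m * m ≤ K := by nlinarith
  have h7 : p * (m * m) ≤ p * K := Nat.mul_le_mul_left _ h6
  have h8 : p * D.kap P X ≤ p * 3 := Nat.mul_le_mul_left _ hk
  have h9 : m * (p * D.kap P X + Sg) ≤ m * (p * 3 + (m + 1) * p) :=
    Nat.mul_le_mul_left _ (by omega)
  have h10 : m * (m + 2 + p * m) ≤ m * (1 + p * 3 + (m + 1) * p) := by nlinarith
  have h11 := Nat.le_of_mul_le_mul_left h10 (by omega)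
  nlinarith

theorem tang {P R w : E} (hP : D.G P = 1) (hA : ¬ D.Cond P) (hw : D.A R w = ∅)
    {X : E} (hX : D.G X = 0) (T : F) (hR : D.G R = 0) : D.G (X + T • R) = 0 := by
  by_cases hX0 : X = 0
  · rw [hX0, zero_add]
    by_cases hT : T = 0
    · rw [hT, zero_smul]; exact D.G_zero
    · rw [D.G_smul hT, hR]
  have hind : Ind2 (F := F) P X := by
    intro s t hst
    have hs : s = 0 := by
      by_contra hs
      have : P = (-(s⁻¹ * t)) • X := by
        have h2 : s • P = -(t • X) := eq_neg_of_add_eq_zero_left hst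
        rw [neg_smul, mul_smul, ← smul_neg, ← h2, smul_smul, inv_mul_cancel₀ hs, one_smul]
      by_cases ht : -(s⁻¹ * t) = 0
      · rw [ht, zero_smul] at this
        exact D.ne_zero_of_one hP this
      · rw [this, D.G_smul ht, hX] at hP
        exact zero_ne_one hP
    subst hs
    simp [hX0] at hst
    exact ⟨rfl, hst⟩
  obtain ⟨w1, hw1⟩ := D.exists_ind3 hind
  have h : Ind3 (F := F) P w1 X := by
    intro a b c hT
    have := hw1 a c b (by rw [← hT]; module)
    exact ⟨this.1, this.2.2, this.2.1⟩
  obtain ⟨s, hs⟩ := D.exists_full hP hA h hX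
  have hi := ind3_a h s
  set w' := w1 + s • P
  obtain ⟨⟨⟨a, b⟩, c⟩, hab⟩ := (D.bij hi).2 R
  obtain ⟨⟨⟨a', b'⟩, c'⟩, hab'⟩ := (D.bij hi).2 w
  simp only at hab hab'
  by_cases hc : c = 0
  · rw [hc, zero_smul, add_zero] at hab
    have e : X + T • R = (1 + T * a) • X + (T * b) • w' := by rw [← hab]; module
    rw [e]; exact D.span_full hX hs _ _
  · exfalso
    have : -(c' / c) ∈ D.A R w := by
      rw [D.mem_A]
      have e : w + (-(c' / c)) • R = (a' - c' / c * a) • X + (b' - c' / c * b) • w'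
          + (c' - c' / c * c) • P := by rw [← hab, ← hab']; module
      rw [e, div_mul_cancel₀ _ hc, sub_self, zero_smul, add_zero]
      exact D.span_full hX hs _ _
    rw [hw] at this
    exact notMem_empty _ this

theorem finish {P R : E} (hP : D.G P = 1) (hA : ¬ D.Cond P) (hR : R ≠ 0)
    (hc : ∀ (X : E) (T : F), D.G X = 0 → D.G (X + T • R) = 0) : D.Concl := by
  have hQ := D.Q_gt
  have hAR : D.A P R = {0} := by
    ext T
    rw [D.mem_A, mem_singleton]
    constructor
    · intro h
      have h1 := hc _ (-1) h
      have e : R + T • P + (-1 : F) • R = T • P := by module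
      rw [e] at h1
      by_contra hT
      rw [D.G_smul hT, hP] at h1
      exact one_ne_zero h1
    · rintro rfl
      have := hc 0 1 D.G_zero
      simpa using this
  have hk : D.kap P R = 0 := by rw [kap, hAR]; simp
  have h1R : D.c 1 P R = 0 := by
    rw [D.c_eq hP R (by omega), hAR]; simp
  obtain ⟨u, w, h, hu, hw⟩ := D.exists_ker hP
  have htan := D.tan_le h hP hA hu hw
  have hbad := D.bad_le_tan h hP
  obtain ⟨x, hx⟩ : ∃ x : F × F, D.kap P (x.1 • u + x.2 • w) = 1 := by
    by_contra hno
    push Not at hno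
    have hsub : D.goodS P u w ⊆ D.tanS P u w := by
      intro x hx
      simp only [goodS, tanS, mem_filter, mem_univ, true_and] at hx ⊢
      have := hno x
      exact ⟨hx.1, by omega⟩
    have h1 := card_le_card hsub
    have h2 := D.good_add_bad P u w
    obtain ⟨m, hm⟩ : ∃ m, p ^ 2 = m + 1 := ⟨p ^ 2 - 1, by omega⟩
    rw [hm, sqm1] at h2
    rw [hm, Nat.add_sub_cancel] at htan
    nlinarith
  have h1v := D.c_one_V hu hw x
  set v := x.1 • u + x.2 • w
  refine D.cone (v := v) (P := P) (R := R) ?_ hP ?_ ?_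
  · intro a b c habc
    have h1 : D.c 1 P (a • v + b • P + c • R) = -b := by
      rw [D.c_one_add, D.c_one_add, D.c_one_smul, D.c_one_smul, D.c_one_smul, h1v, h1R,
        D.c_one_self, hP]; ring
    have h0 : D.c 1 P (0 : E) = 0 := by
      have := D.c_one_smul P P 0
      simpa using this
    rw [habc, h0] at h1
    have hb : b = 0 := by simpa using h1.symm
    subst hb
    rw [zero_smul, add_zero] at habc
    have ha : a = 0 := by
      by_contra ha
      have e : a • v = (-c) • R := by rw [neg_smul]; exact eq_neg_of_add_eq_zero_left habc
      have e1 := D.kap_smul P v ha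
      rw [hx, e] at e1
      by_cases hc0 : -c = 0
      · rw [hc0, zero_smul, kap, D.A_zero_one hP] at e1
        simp at e1
      · rw [D.kap_smul P R hc0, hk] at e1
        omega
    subst ha
    simp [hR] at habc
    exact ⟨rfl, rfl, habc⟩
  · rw [D.card_kap hP, hx]; ring
  · intro α β γ
    constructor
    · intro h1
      have := hc _ (-γ) h1
      have e : α • v + β • P + γ • R + (-γ) • R = α • v + β • P := by module
      rwa [e] at this
    · intro h1; exact hc _ γ h1

theorem caseA {P : E} (hP : D.G P = 1) (hA : ¬ D.Cond P) : D.Concl := by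
  have hQ := D.Q_gt
  have hp4 := D.hp4
  obtain ⟨u, w, h, hu, hw⟩ := D.exists_ker hP
  by_cases htan : (D.tanS P u w).Nonempty
  · obtain ⟨x, hx⟩ := htan
    simp only [tanS, mem_filter, mem_univ, true_and] at hx
    have hT := D.tangent hP hx.2 (D.c_one_V hu hw x)
    set R := x.1 • u + x.2 • w with hRdef
    have hR : R ≠ 0 := by
      intro h0
      have := h x.1 x.2 0 (by rw [← hRdef, h0]; simp)
      exact hx.1 (Prod.ext this.1 this.2.1)
    have hGR : D.G R = 0 := by
      have : (0 : F) ∈ D.A P R := by rw [hT]; simp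
      rw [D.mem_A] at this; simpa using this
    have hRP : D.A R P = ∅ := by
      rw [← card_eq_zero, D.card_swap hP hGR, hx.2, mul_zero]
    exact D.finish hP hA hR fun X T hX => D.tang hP hA hRP hX T hGR
  · rw [not_nonempty_iff_eq_empty] at htan
    have hne : (D.A P u).Nonempty := by
      rw [← card_pos, D.card_kap hP]; omega
    obtain ⟨T, hT⟩ := hne
    rw [D.mem_A] at hT
    set X := u + T • P with hXdef
    have hi : Ind3 (F := F) P w X := by
      intro a b c habc
      have := h c b (c * T + a) (by rw [← habc, hXdef]; module)
      obtain ⟨rfl, rfl, h3⟩ := this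
      simpa using h3
    have hX0 : X ≠ 0 := by
      intro h0
      have := hi 0 0 1 (by rw [h0]; simp)
      simp at this
    by_cases hemp : ∃ s : F, D.A X (w + s • P) = ∅
    · obtain ⟨s, hs⟩ := hemp
      exact D.finish hP hA hX0 fun Y T hY => D.tang hP hA hs hY T hT
    · exfalso
      push Not at hemp
      have hcard : ∀ s : F, (D.A X (w + s • P)).card
          = p + (if D.A X (w + s • P) = univ then 1 else 0) * (p * (p - 1)) := by
        intro s
        rcases D.full_or (ind3_a hi s) hP hA hT with h1 | h1 | h1
        · rw [if_pos h1, h1, card_univ, D.hF]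
          obtain ⟨k, rfl⟩ : ∃ k, p = k + 1 := ⟨p - 1, by omega⟩
          rw [Nat.add_sub_cancel]; ring
        · rw [if_neg, h1]
          · ring
          · intro h2
            rw [h2, card_univ, D.hF] at h1
            nlinarith
        · exact absurd (card_eq_zero.1 h1) (hemp s).ne_empty
      have hsum : ∑ s : F, (D.A X (w + s • P)).card = p ^ 2 * p
          + (univ.filter fun s : F => D.A X (w + s • P) = univ).card * (p * (p - 1)) := by
        rw [sum_congr rfl fun s _ => hcard s, sum_add_distrib, sum_const, card_univ, D.hF,
          smul_eq_mul, ← sum_mul, card_filter]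
      set f := (univ.filter fun s : F => D.A X (w + s • P) = univ).card
      have h1 := D.total_X hi hT
      rw [D.total_P h hP, hsum, D.card_swap hP hT] at h1
      have hkap : ∀ x : F × F, x ≠ 0 → D.kap P (x.1 • u + x.2 • w) = 1 := by
        have hbad := D.bad_le_tan h hP
        rw [htan, card_empty] at hbad
        have hbad : D.badS P u w = ∅ := card_eq_zero.1 (by omega)
        intro x hx
        by_contra hne
        by_cases h0 : D.kap P (x.1 • u + x.2 • w) = 0
        · have : x ∈ D.tanS P u w := by
            simp only [tanS, mem_filter, mem_univ, true_and]; exact ⟨hx, h0⟩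
          rw [htan] at this; exact notMem_empty _ this
        · have : x ∈ D.badS P u w := by
            simp only [badS, mem_filter, mem_univ, true_and]; exact ⟨hx, by omega⟩
          rw [hbad] at this; exact notMem_empty _ this
      have hk1 : D.kap P X = 1 := by
        rw [hXdef, D.kap_shift]
        have := hkap (1, 0) (by simp)
        simpa using this
      have hks : ∑ x ∈ univ.filter (fun x : F × F => x ≠ 0), D.kap P (x.1 • u + x.2 • w)
          = (p ^ 2) ^ 2 - 1 := by
        rw [← D.card_ne2, card_eq_sum_ones]
        exact sum_congr rfl fun x hx => hkap x (by simpa using hx)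
      rw [hk1, hks] at h1
      obtain ⟨m, hm⟩ : ∃ m, p ^ 2 = m + 1 := ⟨p ^ 2 - 1, by omega⟩
      obtain ⟨k, hk⟩ : ∃ k, p = k + 1 := ⟨p - 1, by omega⟩
      have hp1 : p - 1 = k := by omega
      rw [hp1] at h1
      rw [hm, sqm1, Nat.add_sub_cancel] at h1
      have h2 : m * (m + 2 + p * (m + 2)) = m * (1 + (p * 1 + ((m + 1) * p + f * (p * k)))) := by
        linarith
      have h3 := Nat.eq_of_mul_eq_mul_left (by omega) h2
      have h4 : p * p = p * (f * k) := by nlinarith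
      have h5 := Nat.eq_of_mul_eq_mul_left D.hp.pos h4
      have h6 : k ∣ p := ⟨f, by rw [h5]; ring⟩
      rcases (Nat.dvd_prime D.hp).1 h6 with h7 | h7 <;> omega

theorem main : D.Concl := by
  by_cases hB : ∀ P, D.G P = 1 → D.Cond P
  · exact D.caseB hB
  · push Not at hB
    obtain ⟨P, hP, hA⟩ := hB
    exact D.caseA hP hA

end PD
end P11
end QH

namespace QH
section P12
open scoped Classical
open Finset

theorem pt_eq {F : Type} [Field F] {n : ℕ} (P : ProjPoint F n) {x : Fin n → F} (hx : x ≠ 0)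
    (h : x ∈ P.1) : P.1 = Submodule.span F {x} := by
  symm
  apply Submodule.eq_of_le_of_finrank_eq
  · rw [Submodule.span_singleton_le_iff_mem]; exact h
  · rw [finrank_span_singleton hx, P.2]

theorem pt_gen {F : Type} [Field F] {n : ℕ} (P : ProjPoint F n) : ∃ x : Fin n → F, x ≠ 0 ∧ x ∈ P.1 := by
  have h : P.1 ≠ ⊥ := by
    intro h
    have := P.2
    rw [h, finrank_bot] at this
    omega
  obtain ⟨x, hx, h0⟩ := Submodule.exists_mem_ne_zero_of_ne_bot h
  exact ⟨x, h0, hx⟩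

theorem pt_unique {F : Type} [Field F] {n : ℕ} {P P' : ProjPoint F n} {x : Fin n → F} (hx : x ≠ 0)
    (h : x ∈ P.1) (h' : x ∈ P'.1) : P = P' :=
  Subtype.ext ((pt_eq P hx h).trans (pt_eq P' hx h').symm)

def mkPt {F : Type} [Field F] {n : ℕ} (x : Fin n → F) (hx : x ≠ 0) : ProjPoint F n :=
  ⟨Submodule.span F {x}, finrank_span_singleton hx⟩

instance finPt {F : Type} [Field F] [Fintype F] {n : ℕ} : Finite (ProjPoint F n) := by
  unfold ProjPoint; infer_instance

theorem card_vec {F : Type} [Field F] [Fintype F] {Q : ℕ} (hF : Fintype.card F = Q) {n : ℕ}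
    (S : Set (ProjPoint F n)) :
    (univ.filter fun x : Fin n → F => x ≠ 0 ∧ ∃ P ∈ S, x ∈ P.1).card = S.ncard * (Q - 1) := by
  have hS := S.toFinite
  rw [Set.ncard_eq_toFinset_card S hS]
  have e : (univ.filter fun x : Fin n → F => x ≠ 0 ∧ ∃ P ∈ S, x ∈ P.1)
      = hS.toFinset.biUnion fun P => univ.filter fun x => x ≠ 0 ∧ x ∈ P.1 := by
    ext x
    simp only [mem_filter, mem_univ, true_and, mem_biUnion, Set.Finite.mem_toFinset]
    constructor
    · rintro ⟨h0, P, hP, hx⟩; exact ⟨P, hP, h0, hx⟩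
    · rintro ⟨P, hP, h0, hx⟩; exact ⟨h0, P, hP, hx⟩
  rw [e, card_biUnion, sum_congr rfl (g := fun _ => Q - 1), sum_const, smul_eq_mul]
  · intro P _
    obtain ⟨x, hx0, hx⟩ := pt_gen P
    rw [pt_eq P hx0 hx]
    have e : (univ.filter fun y : Fin n → F => y ≠ 0 ∧ y ∈ Submodule.span F {x})
        = (univ.erase (0 : F)).image fun s => s • x := by
      ext y
      simp only [mem_filter, mem_univ, true_and, mem_image, mem_erase, and_true,
        Submodule.mem_span_singleton]
      constructor
      · rintro ⟨h0, s, rfl⟩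
        exact ⟨s, fun h => h0 (by rw [h, zero_smul]), rfl⟩
      · rintro ⟨s, hs, rfl⟩
        exact ⟨smul_ne_zero hs hx0, s, rfl⟩
    rw [e, card_image_of_injective _ (smul_left_injective F hx0),
      card_erase_of_mem (mem_univ _), card_univ, hF]
  · intro P _ P' _ hne
    rw [Function.onFun, disjoint_left]
    intro x hx hx'
    simp only [mem_filter, mem_univ, true_and] at hx hx'
    exact hne (pt_unique hx.1 hx.2 hx'.2)

theorem key {p r : ℕ} (hp : p.Prime) (hr : 1 ≤ r)
    {F : Type} [Field F] [Fintype F] (hF : Fintype.card F = p ^ 2)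
    (V : Set (ProjPoint F (r + 1))) (hV : IsQuasiHermitian F p r V)
    (hcode : charVec F p (r + 1) V ∈ hypCode F p (r + 1)) :
    ∃ (N : ℕ) (a : Fin N → F) (h : Fin N → ((Fin (r + 1) → F) →ₗ[F] F)),
      ∀ x, ∑ i, a i * (h i x) ^ (p ^ 2 - 1) = if x ≠ 0 ∧ ¬ ∃ P ∈ V, x ∈ P.1 then 1 else 0 := by
  have := charP_F hp hF
  have hpp : 1 < p ^ 2 := Nat.one_lt_pow (by norm_num) hp.one_lt
  obtain ⟨N, a, g, hg⟩ := Submodule.mem_span_set'.1 hcode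
  choose H hH1 hH2 using fun i => (g i).2
  have hex : ∀ i, ∃ h : (Fin (r + 1) → F) →ₗ[F] F, LinearMap.ker h = H i := by
    intro i
    have hlt : H i < ⊤ := by
      rw [lt_top_iff_ne_top]
      intro h
      have := hH1 i
      rw [h, finrank_top, finrank_fin_fun] at this
      omega
    obtain ⟨f, hf, hle⟩ := Submodule.exists_le_ker_of_lt_top _ hlt
    refine ⟨f, ?_⟩
    symm
    apply Submodule.eq_of_le_of_finrank_eq hle
    rw [hH1]
    have h1 := LinearMap.finrank_range_add_finrank_ker f
    have h2 : finrank F (LinearMap.range f) = 1 := by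
      rw [LinearMap.range_eq_top.2 (LinearMap.surjective hf), finrank_top, finrank_self]
    rw [h2, finrank_fin_fun] at h1
    omega
  choose h hh using hex
  set b : Fin N → F := fun i => ZMod.castHom (dvd_refl p) F (a i) with hb
  have hpt : ∀ x : Fin (r + 1) → F, x ≠ 0 → (if ∃ P ∈ V, x ∈ P.1 then (1 : F) else 0)
      = ∑ i, b i * (if h i x = 0 then 1 else 0) := by
    intro x hx
    have h1 := congrFun hg (mkPt x hx)
    have h2 := congrArg (ZMod.castHom (dvd_refl p) F) h1
    have h3 : ZMod.castHom (dvd_refl p) F (charVec F p (r + 1) V (mkPt x hx))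
        = if ∃ P ∈ V, x ∈ P.1 then (1 : F) else 0 := by
      have : (∃ P ∈ V, x ∈ P.1) ↔ mkPt x hx ∈ V := by
        have hm : x ∈ (mkPt x hx).1 := Submodule.mem_span_singleton_self x
        constructor
        · rintro ⟨P, hP, hxP⟩
          rwa [pt_unique hx hm hxP]
        · intro h; exact ⟨_, h, hm⟩
      simp only [this, charVec, Set.indicator_apply]
      split_ifs <;> simp
    rw [h3] at h2
    rw [← h2, Finset.sum_apply, map_sum]
    refine sum_congr rfl fun i _ => ?_
    rw [Pi.smul_apply, smul_eq_mul, map_mul, hH2 i, hb]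
    congr 1
    have : mkPt x hx ∈ pointsIn F (r + 1) (H i) ↔ h i x = 0 := by
      rw [← LinearMap.mem_ker, hh i]
      exact Submodule.span_singleton_le_iff_mem _ _
    simp only [charVec, Set.indicator_apply, this]
    split_ifs <;> simp
  have hσ : ∑ i, b i = 1 := by
    have h1 : ∑ x ∈ univ.filter (fun x : Fin (r + 1) → F => x ≠ 0),
        (if ∃ P ∈ V, x ∈ P.1 then (1 : F) else 0) = -1 := by
      rw [← sum_filter, filter_filter, sum_const, card_vec hF, nsmul_eq_mul, mul_one]
      have h2 := congrArg (Int.cast : ℤ → F) hV.1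
      push_cast at h2
      rw [CharP.cast_eq_zero F p] at h2
      rw [Nat.cast_mul, Nat.cast_sub (by omega)]
      push_cast
      rw [CharP.cast_eq_zero F p, h2, zero_pow (by omega), zero_pow (by omega), zero_add,
        zero_sub, mul_neg, ← pow_add, Even.neg_one_pow ⟨r, rfl⟩]
    rw [sum_congr rfl (fun x hx => hpt x (by simpa using hx)), sum_comm] at h1
    have h3 : ∀ i, ∑ x ∈ univ.filter (fun x : Fin (r + 1) → F => x ≠ 0),
        b i * (if h i x = 0 then (1 : F) else 0) = - b i := by
      intro i
      rw [← mul_sum]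
      have h4 : ∑ x : Fin (r + 1) → F, (if h i x = 0 then (1 : F) else 0) = 0 := by
        rw [← sum_filter, sum_const, nsmul_eq_mul, mul_one]
        have h5 : (univ.filter fun x => h i x = 0).card = Fintype.card (LinearMap.ker (h i)) := by
          rw [Fintype.card_subtype]
          simp only [LinearMap.mem_ker]
        rw [h5, Module.card_eq_pow_finrank (K := F), hh i, hH1, hF, Nat.cast_pow, Nat.cast_pow,
          CharP.cast_eq_zero F p, zero_pow (by norm_num), zero_pow (by omega)]
      rw [← add_sum_erase _ _ (mem_univ 0), ← filter_ne'] at h4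
      simp only [map_zero, if_true] at h4
      rw [eq_neg_of_add_eq_zero_right h4]; ring
    rw [sum_congr rfl fun i _ => h3 i, sum_neg_distrib] at h1
    exact neg_injective h1
  refine ⟨N, b, h, fun x => ?_⟩
  by_cases hx : x = 0
  · subst hx
    simp [show p ^ 2 - 1 ≠ 0 by omega]
  · have h1 := hpt x hx
    have h2 : ∑ i, b i * (h i x) ^ (p ^ 2 - 1) = ∑ i, b i
        - ∑ i, b i * (if h i x = 0 then 1 else 0) := by
      rw [← sum_sub_distrib]
      refine sum_congr rfl fun i _ => ?_
      rw [pow_card_sub_one_ite hF]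
      split_ifs <;> ring
    rw [h2, ← h1, hσ]
    simp only [ne_eq, hx, not_false_eq_true, true_and]
    split_ifs <;> simp

end P12
end QH

namespace QH
section P13
open scoped Classical
open Finset

theorem exists_PD {p r : ℕ} (hp : p.Prime) (hp4 : 4 < p) (hr : 4 ≤ r)
    {F : Type} [Field F] [Fintype F] (hF : Fintype.card F = p ^ 2)
    (V : Set (ProjPoint F (r + 1))) (hV : IsQuasiHermitian F p r V)
    (hcode : charVec F p (r + 1) V ∈ hypCode F p (r + 1))
    (π : Submodule F (Fin (r + 1) → F)) [Fintype π] (hπ : finrank F π = 3)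
    (hsize : secant F (r + 1) V π ≤ p ^ 3 + p ^ 2 + p + 1) :
    ∃ D : PD F π p, ∀ y : π, D.G y = if (y : Fin (r + 1) → F) ≠ 0 ∧
      ¬ ∃ P ∈ V, (y : Fin (r + 1) → F) ∈ P.1 then 1 else 0 := by
  obtain ⟨N, a, h, hk⟩ := key hp (by omega) hF V hV hcode
  have hk' : ∀ y : π, ∑ i, a i * ((h i ∘ₗ π.subtype) y) ^ (p ^ 2 - 1)
      = if (y : Fin (r + 1) → F) ≠ 0 ∧ ¬ ∃ P ∈ V, (y : Fin (r + 1) → F) ∈ P.1 then 1 else 0 :=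
    fun y => hk y
  refine ⟨⟨hp, hp4, hF, ?_, Fin N, univ, a, fun i => h i ∘ₗ π.subtype, ?_, ?_⟩, ?_⟩
  · rw [Module.card_eq_pow_finrank (K := F), hπ, hF]
  · intro y
    rw [hk']
    split_ifs
    · right; rfl
    · left; rfl
  · simp only [hk']
    have h1 := card_vec hF (V ∩ pointsIn F (r + 1) π)
    have h2 : (univ.filter fun y : π => (if (y : Fin (r + 1) → F) ≠ 0 ∧
        ¬ ∃ P ∈ V, (y : Fin (r + 1) → F) ∈ P.1 then (1 : F) else 0) = 0).card
        ≤ (insert (0 : Fin (r + 1) → F) (univ.filter fun x : Fin (r + 1) → F =>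
          x ≠ 0 ∧ ∃ P ∈ V ∩ pointsIn F (r + 1) π, x ∈ P.1)).card := by
      apply card_le_card_of_injOn (fun y : π => (y : Fin (r + 1) → F))
      · intro y hy
        simp only [coe_filter, mem_univ, true_and, Set.mem_setOf_eq, ite_eq_right_iff,
          one_ne_zero, imp_false, not_and, not_not] at hy
        simp only [coe_insert, coe_filter, mem_univ, true_and, Set.mem_insert_iff,
          Set.mem_setOf_eq]
        by_cases h0 : (y : Fin (r + 1) → F) = 0
        · left; exact h0
        · right
          obtain ⟨P, hP, hyP⟩ := hy h0
          refine ⟨h0, P, ⟨hP, ?_⟩, hyP⟩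
          change P.1 ≤ π
          rw [pt_eq P h0 hyP, Submodule.span_singleton_le_iff_mem]
          exact y.2
      · intro y _ y' _ he
        exact Subtype.ext he
    refine h2.trans ((card_insert_le _ _).trans ?_)
    rw [h1]
    have h3 : secant F (r + 1) V π * (p ^ 2 - 1) ≤ (p ^ 3 + p ^ 2 + p + 1) * (p ^ 2 - 1) :=
      Nat.mul_le_mul_right _ hsize
    exact Nat.add_le_add_right h3 1
  · intro y
    exact hk' y

end P13
end QH

/-- in PG(r, p²) with `r ≥ 4` and `p > 4` prime, if a plane `π` meets
`V` in at most `p³ + p² + p + 1` points, then `π ∩ V` is a classical unital of `π`, a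
single line of `π`, or the union of `p + 1` distinct concurrent lines of `π`. -/
theorem stmt14 (p r : ℕ) (hp : p.Prime) (hp4 : 4 < p) (hr : 4 ≤ r)
    (F : Type) [Field F] [Fintype F] (hF : Fintype.card F = p ^ 2)
    (V : Set (ProjPoint F (r + 1))) (hV : IsQuasiHermitian F p r V)
    (hcode : charVec F p (r + 1) V ∈ hypCode F p (r + 1))
    (π : Submodule F (Fin (r + 1) → F)) (hπ : finrank F π = 3)
    (hsize : secant F (r + 1) V π ≤ p ^ 3 + p ^ 2 + p + 1) :
    IsClassicalUnital F p (r + 1) π (V ∩ pointsIn F (r + 1) π) ∨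
    (∃ ℓ : Submodule F (Fin (r + 1) → F), ℓ ≤ π ∧ finrank F ℓ = 2 ∧
      V ∩ pointsIn F (r + 1) π = pointsIn F (r + 1) ℓ) ∨
    (∃ L : Finset (Submodule F (Fin (r + 1) → F)), L.card = p + 1 ∧
      (∀ ℓ ∈ L, ℓ ≤ π ∧ finrank F ℓ = 2) ∧
      (∃ P : ProjPoint F (r + 1), ∀ ℓ ∈ L, P.1 ≤ ℓ) ∧
      V ∩ pointsIn F (r + 1) π = ⋃ ℓ ∈ L, pointsIn F (r + 1) ℓ) := by
  classical
  have : Fintype π := Fintype.ofFinite _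
  obtain ⟨D, hD⟩ := QH.exists_PD hp hp4 hr hF V hV hcode π hπ hsize
  have hmem : ∀ (P : ProjPoint F (r + 1)) (x : Fin (r + 1) → F), x ≠ 0 → x ∈ P.1 →
      (P ∈ V ∩ pointsIn F (r + 1) π ↔ ∃ y : π, (y : Fin (r + 1) → F) = x ∧ D.G y = 0) := by
    intro P x hx hxP
    constructor
    · rintro ⟨h1, h2⟩
      refine ⟨⟨x, h2 hxP⟩, rfl, ?_⟩
      rw [hD, if_neg]
      intro h; exact h.2 ⟨P, h1, hxP⟩
    · rintro ⟨y, rfl, hy⟩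
      rw [hD] at hy
      have hy' : ∃ P ∈ V, (y : Fin (r + 1) → F) ∈ P.1 := by
        by_contra hno
        rw [if_pos ⟨hx, hno⟩] at hy
        exact one_ne_zero hy
      obtain ⟨P', hP', hyP'⟩ := hy'
      rw [QH.pt_unique hx hxP hyP']
      refine ⟨hP', ?_⟩
      change P'.1 ≤ π
      rw [QH.pt_eq P' hx hyP', Submodule.span_singleton_le_iff_mem]
      exact y.2
  have hpin : ∀ (P : ProjPoint F (r + 1)) (x : Fin (r + 1) → F), x ≠ 0 → x ∈ P.1 →
      ∀ W : Submodule F (Fin (r + 1) → F), P.1 ≤ W ↔ x ∈ W := by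
    intro P x hx hxP W
    rw [QH.pt_eq P hx hxP, Submodule.span_singleton_le_iff_mem]
  have hmap : ∀ (ℓ : Submodule F π), finrank F (ℓ.map π.subtype) = finrank F ℓ := fun ℓ =>
    (Submodule.equivMapOfInjective π.subtype π.injective_subtype ℓ).finrank_eq.symm
  rcases D.main with ⟨e, A, hA1, hA2, hA3⟩ | ⟨ℓ, hℓ, hy⟩ | ⟨L, hL1, hL2, ⟨R, hR0, hR⟩, hL3⟩
  · left
    refine ⟨π.subtype ∘ₗ e.toLinearMap, ?_, ?_, A, hA1, hA2, ?_⟩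
    · rw [LinearMap.ker_eq_bot]
      exact π.injective_subtype.comp e.injective
    · rw [LinearMap.range_comp, LinearEquiv.range, Submodule.map_top, Submodule.range_subtype]
    · ext P
      obtain ⟨x, hx, hxP⟩ := QH.pt_gen P
      rw [hmem P x hx hxP]
      constructor
      · rintro ⟨y, rfl, hy⟩
        refine ⟨e.symm y, ?_, ?_, ?_⟩
        · intro h0
          rw [LinearEquiv.map_eq_zero_iff] at h0
          apply hx; rw [h0]; rfl
        · simpa using QH.pt_eq P hx hxP
        · rw [← hA3, LinearEquiv.apply_symm_apply]; exact hy
      · rintro ⟨y, hy0, hyP, hy⟩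
        have hex : x ∈ Submodule.span F {(π.subtype ∘ₗ e.toLinearMap) y} := by
          rw [← hyP]; exact hxP
        obtain ⟨s, hs⟩ := Submodule.mem_span_singleton.1 hex
        refine ⟨s • e y, hs, ?_⟩
        have hs0 : s ≠ 0 := by
          rintro rfl
          rw [zero_smul] at hs
          exact hx hs.symm
        rw [D.G_smul hs0, hA3]; exact hy
  · right; left
    refine ⟨ℓ.map π.subtype, Submodule.map_subtype_le π ℓ, by rw [hmap, hℓ], ?_⟩
    ext P
    obtain ⟨x, hx, hxP⟩ := QH.pt_gen P
    rw [hmem P x hx hxP]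
    change _ ↔ P.1 ≤ _
    rw [hpin P x hx hxP, Submodule.mem_map]
    constructor
    · rintro ⟨y, rfl, h⟩; exact ⟨y, (hy y).1 h, rfl⟩
    · rintro ⟨y, h, rfl⟩; exact ⟨y, rfl, (hy y).2 h⟩
  · right; right
    refine ⟨L.image (fun ℓ => ℓ.map π.subtype), ?_, ?_, ⟨QH.mkPt (R : Fin (r + 1) → F) ?_, ?_⟩, ?_⟩
    · rw [Finset.card_image_of_injective _ (Submodule.map_injective_of_injective
        π.injective_subtype), hL1]
    · intro ℓ hℓ
      obtain ⟨ℓ', hℓ', rfl⟩ := Finset.mem_image.1 hℓ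
      exact ⟨Submodule.map_subtype_le π ℓ', by rw [hmap, hL2 ℓ' hℓ']⟩
    · intro h0; exact hR0 (Subtype.ext h0)
    · intro ℓ hℓ
      obtain ⟨ℓ', hℓ', rfl⟩ := Finset.mem_image.1 hℓ
      rw [QH.mkPt, Submodule.span_singleton_le_iff_mem]
      exact ⟨R, hR ℓ' hℓ', rfl⟩
    · ext P
      obtain ⟨x, hx, hxP⟩ := QH.pt_gen P
      rw [hmem P x hx hxP]
      simp only [Set.mem_iUnion, Finset.mem_image, exists_prop]
      constructor
      · rintro ⟨y, rfl, h⟩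
        obtain ⟨ℓ, hℓ, hyℓ⟩ := (hL3 y).1 h
        exact ⟨_, ⟨ℓ, hℓ, rfl⟩, (hpin P _ hx hxP _).2 ⟨y, hyℓ, rfl⟩⟩
      · rintro ⟨_, ⟨ℓ, hℓ, rfl⟩, h⟩
        obtain ⟨y, hyℓ, rfl⟩ := (hpin P _ hx hxP _).1 h
        exact ⟨y, rfl, (hL3 y).2 ⟨ℓ, hℓ, hyℓ⟩⟩
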